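/- arXiv:2602.03653 — 4 statements merged into one kernel-verified Lean document; each statement's English description precedes it below -/
import Mathlib

section
/- Every bounded double complex of finite-dimensional complex vector spaces is isomorphic, as a double complex, to a direct sum of double complexes each of which is either a square or a zigzag. -/
open Submodule

/-- A double complex of complex vector spaces, presented as a bigraded direct-sum
decomposition `K p q` of an ambient space `V`, together with anticommuting
differentials `d1 = ∂` (of bidegree `(1,0)`) and `d2 = ∂̄` (of bidegree `(0,1)`). -/
structure DoubleComplex (V : Type*) [AddCommGroup V] [Module ℂ V] where
  K : ℤ → ℤ → Submodule ℂ V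
  isInternal : DirectSum.IsInternal fun pq : ℤ × ℤ => K pq.1 pq.2
  d1 : V →ₗ[ℂ] V
  d2 : V →ₗ[ℂ] V
  d1_mem : ∀ p q : ℤ, ∀ x ∈ K p q, d1 x ∈ K (p + 1) q
  d2_mem : ∀ p q : ℤ, ∀ x ∈ K p q, d2 x ∈ K p (q + 1)
  d1_d1 : d1 ∘ₗ d1 = 0
  d2_d2 : d2 ∘ₗ d2 = 0
  anticomm : d1 ∘ₗ d2 + d2 ∘ₗ d1 = 0

/-- The dimension (as a natural number) of the quotient of a submodule `M` of `V`
by (the trace on `M` of) a submodule `N`. -/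
noncomputable def qdim {V : Type*} [AddCommGroup V] [Module ℂ V]
    (M N : Submodule ℂ V) : ℕ :=
  Module.finrank ℂ (↥M ⧸ N.comap M.subtype)

/-- The linear map between quotients `M₁/N₁ → M₂/N₂` induced by the identity,
for `M₁ ≤ M₂` and `N₁ ≤ N₂`. -/
def quotMap {V : Type*} [AddCommGroup V] [Module ℂ V] {M₁ N₁ M₂ N₂ : Submodule ℂ V}
    (hM : M₁ ≤ M₂) (hN : N₁ ≤ N₂) :
    (↥M₁ ⧸ N₁.comap M₁.subtype) →ₗ[ℂ] (↥M₂ ⧸ N₂.comap M₂.subtype) :=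
  Submodule.mapQ _ _ (Submodule.inclusion hM) fun _ hx => hN hx

namespace DoubleComplex

variable {V : Type*} [AddCommGroup V] [Module ℂ V] (D : DoubleComplex V)

/-- A double complex is bounded if only finitely many components are non-zero. -/
def Bounded : Prop := Set.Finite {pq : ℤ × ℤ | D.K pq.1 pq.2 ≠ ⊥}

lemma d1_d1_apply (x : V) : D.d1 (D.d1 x) = 0 := by
  simpa using LinearMap.ext_iff.mp D.d1_d1 x

lemma d2_d2_apply (x : V) : D.d2 (D.d2 x) = 0 := by
  simpa using LinearMap.ext_iff.mp D.d2_d2 x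

lemma anticomm_apply (x : V) : D.d1 (D.d2 x) + D.d2 (D.d1 x) = 0 := by
  simpa using LinearMap.ext_iff.mp D.anticomm x

/-- Numerator `ker ∂̄ ∩ K^{p,q}` of the Dolbeault cohomology. -/
def dolN (p q : ℤ) : Submodule ℂ V := LinearMap.ker D.d2 ⊓ D.K p q
/-- Denominator `∂̄ K^{p,q-1}` of the Dolbeault cohomology. -/
def dolD (p q : ℤ) : Submodule ℂ V := (D.K p (q - 1)).map D.d2
/-- Numerator `ker ∂ ∩ K^{p,q}` of the conjugate Dolbeault cohomology. -/
def conjN (p q : ℤ) : Submodule ℂ V := LinearMap.ker D.d1 ⊓ D.K p q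
/-- Denominator `∂ K^{p-1,q}` of the conjugate Dolbeault cohomology. -/
def conjD (p q : ℤ) : Submodule ℂ V := (D.K (p - 1) q).map D.d1
/-- Numerator `ker ∂ ∩ ker ∂̄ ∩ K^{p,q}` of the Bott-Chern cohomology. -/
def bcN (p q : ℤ) : Submodule ℂ V := LinearMap.ker D.d1 ⊓ LinearMap.ker D.d2 ⊓ D.K p q
/-- Denominator `∂∂̄ K^{p-1,q-1}` of the Bott-Chern cohomology. -/
def bcD (p q : ℤ) : Submodule ℂ V := (D.K (p - 1) (q - 1)).map (D.d1 ∘ₗ D.d2)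
/-- Numerator `ker ∂∂̄ ∩ K^{p,q}` of the Aeppli cohomology. -/
def aeN (p q : ℤ) : Submodule ℂ V := LinearMap.ker (D.d1 ∘ₗ D.d2) ⊓ D.K p q
/-- Denominator `∂ K^{p-1,q} + ∂̄ K^{p,q-1}` of the Aeppli cohomology. -/
def aeD (p q : ℤ) : Submodule ℂ V := (D.K (p - 1) q).map D.d1 ⊔ (D.K p (q - 1)).map D.d2

/-- The degree-`k` part `Tot^k = ⊕_{p+q=k} K^{p,q}` of the total complex. -/
def Tot (k : ℤ) : Submodule ℂ V := ⨆ p : ℤ, D.K p (k - p)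
/-- The total differential `d = ∂ + ∂̄`. -/
def dT : V →ₗ[ℂ] V := D.d1 + D.d2
/-- Numerator `ker d ∩ Tot^k` of the de Rham cohomology of the total complex. -/
def dRN (k : ℤ) : Submodule ℂ V := LinearMap.ker D.dT ⊓ D.Tot k
/-- Denominator `d (Tot^{k-1})` of the de Rham cohomology of the total complex. -/
def dRD (k : ℤ) : Submodule ℂ V := (D.Tot (k - 1)).map D.dT

/-- Hodge number `h_∂̄^{p,q}`. -/
noncomputable def hDol (p q : ℤ) : ℕ := qdim (D.dolN p q) (D.dolD p q)
/-- Conjugate Hodge number `h_∂^{p,q}`. -/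
noncomputable def hConj (p q : ℤ) : ℕ := qdim (D.conjN p q) (D.conjD p q)
/-- Bott-Chern number `h_BC^{p,q}`. -/
noncomputable def hBC (p q : ℤ) : ℕ := qdim (D.bcN p q) (D.bcD p q)
/-- Aeppli number `h_A^{p,q}`. -/
noncomputable def hAe (p q : ℤ) : ℕ := qdim (D.aeN p q) (D.aeD p q)
/-- Betti number `b_k` of the total complex. -/
noncomputable def b (k : ℤ) : ℕ := qdim (D.dRN k) (D.dRD k)

/-- The `∂∂̄`-lemma property:
`ker ∂ ∩ ker ∂̄ ∩ (im ∂ + im ∂̄) ∩ K^{p,q} = ∂∂̄ K^{p-1,q-1}` for every `(p,q)`. -/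
def SatisfiesDdbarLemma : Prop :=
  ∀ p q : ℤ,
    LinearMap.ker D.d1 ⊓ LinearMap.ker D.d2 ⊓ (D.conjD p q ⊔ D.dolD p q) ⊓ D.K p q =
      D.bcD p q

end DoubleComplex

namespace DoubleComplex

variable {V : Type*} [AddCommGroup V] [Module ℂ V] (D : DoubleComplex V)

/-- `S` is a sub-double-complex: it is stable under both differentials and is
bigraded (it is the sum of its traces on the bigraded components). -/
def IsSubcomplex (S : Submodule ℂ V) : Prop :=
  S.map D.d1 ≤ S ∧ S.map D.d2 ≤ S ∧ S = ⨆ p : ℤ, ⨆ q : ℤ, S ⊓ D.K p q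

/-- `S` is a square: its only non-zero components sit at the four corners
`(p,q)`, `(p+1,q)`, `(p,q+1)`, `(p+1,q+1)`, each is one-dimensional (isomorphic
to `ℂ`), and the four connecting maps `∂`, `∂̄` between them are isomorphisms. -/
def IsSquare (S : Submodule ℂ V) : Prop :=
  ∃ p q : ℤ,
    (∀ p' q' : ℤ, ¬((p' = p ∨ p' = p + 1) ∧ (q' = q ∨ q' = q + 1)) →
      S ⊓ D.K p' q' = ⊥) ∧
    Module.finrank ℂ ↥(S ⊓ D.K p q) = 1 ∧
    Module.finrank ℂ ↥(S ⊓ D.K (p + 1) q) = 1 ∧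
    Module.finrank ℂ ↥(S ⊓ D.K p (q + 1)) = 1 ∧
    Module.finrank ℂ ↥(S ⊓ D.K (p + 1) (q + 1)) = 1 ∧
    (S ⊓ D.K p q).map D.d1 = S ⊓ D.K (p + 1) q ∧
    (S ⊓ D.K p (q + 1)).map D.d1 = S ⊓ D.K (p + 1) (q + 1) ∧
    (S ⊓ D.K p q).map D.d2 = S ⊓ D.K p (q + 1) ∧
    (S ⊓ D.K (p + 1) q).map D.d2 = S ⊓ D.K (p + 1) (q + 1)

/-- Two positions of the bigraded plane are adjacent within `S` when a non-zero
component of a differential of `S` connects them (in either direction). -/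
def ZigzagStep (S : Submodule ℂ V) (a b : ℤ × ℤ) : Prop :=
  (b = (a.1 + 1, a.2) ∧ (S ⊓ D.K a.1 a.2).map D.d1 ≠ ⊥) ∨
  (b = (a.1, a.2 + 1) ∧ (S ⊓ D.K a.1 a.2).map D.d2 ≠ ⊥) ∨
  (a = (b.1 + 1, b.2) ∧ (S ⊓ D.K b.1 b.2).map D.d1 ≠ ⊥) ∨
  (a = (b.1, b.2 + 1) ∧ (S ⊓ D.K b.1 b.2).map D.d2 ≠ ⊥)

/-- `S` is a zigzag: it is non-zero, every non-zero component is one-dimensional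
(isomorphic to `ℂ`), all non-zero components lie on at most two consecutive
antidiagonals, every non-zero map `∂` or `∂̄` between components is an isomorphism,
and any two non-zero components are connected by a chain of non-zero maps. -/
def IsZigzag (S : Submodule ℂ V) : Prop :=
  S ≠ ⊥ ∧
  (∀ p q : ℤ, S ⊓ D.K p q = ⊥ ∨ Module.finrank ℂ ↥(S ⊓ D.K p q) = 1) ∧
  (∃ k : ℤ, ∀ p q : ℤ, S ⊓ D.K p q ≠ ⊥ → p + q = k ∨ p + q = k + 1) ∧
  (∀ p q : ℤ, (S ⊓ D.K p q).map D.d1 = ⊥ ∨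
    ((S ⊓ D.K p q).map D.d1 = S ⊓ D.K (p + 1) q ∧
      Disjoint (LinearMap.ker D.d1) (S ⊓ D.K p q))) ∧
  (∀ p q : ℤ, (S ⊓ D.K p q).map D.d2 = ⊥ ∨
    ((S ⊓ D.K p q).map D.d2 = S ⊓ D.K p (q + 1) ∧
      Disjoint (LinearMap.ker D.d2) (S ⊓ D.K p q))) ∧
  (∀ a b : ℤ × ℤ, S ⊓ D.K a.1 a.2 ≠ ⊥ → S ⊓ D.K b.1 b.2 ≠ ⊥ →
    Relation.ReflTransGen (D.ZigzagStep S) a b)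

end DoubleComplex

/-!
Summands are split off one at a time. If `∂∂̄y ≠ 0` for some homogeneous `y`, a functional `f` with
`f (∂∂̄y) = 1` gives projections onto the lines through `y`, `∂y`, `∂̄y` and `∂∂̄y` that commute
with `∂` and `∂̄`, so the square generated by `y` is a direct summand.

Otherwise `∂∂̄ = 0`. Let `k` be the lowest total degree in which the complex is nonzero; nothing
maps into degree `k`, and `∂` and `∂̄` vanish on the images of degree `k` in degree `k + 1`.
Consecutive sources `K^{p,k-p}` and `K^{p+1,k-p-1}` are linked by the linear relation `∂y = ∂̄z`.
Starting from subspaces `Z < A` of the leftmost nonzero source, take images under these relations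
for as long as the image of `Z` stays strictly smaller than that of `A`. Where this ends, choose a
vector of `A` and a functional that kills `Z` and is nonzero on that vector, and pull both back
along the relations. The resulting projections onto lines extend to the targets `K^{p+1,k-p}` and
commute with `∂` and `∂̄`; their images form a zigzag that is a direct summand.
-/

section RankOneProjections

variable {R M N P : Type*} [CommRing R] [AddCommGroup M] [Module R M] [AddCommGroup N] [Module R N]
  [AddCommGroup P] [Module R P]

/-- A vector paired with a functional is thought of as the endomorphism `y ↦ e.2 y • e.1` of rank at
most one; `IsDualPair e` says that this is the projection onto a line, or that `e` is zero. -/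
def IsDualPair (e : M × Module.Dual R M) : Prop := e.2 e.1 = 1 ∨ e = 0

lemma IsDualPair.zero : IsDualPair (0 : M × Module.Dual R M) := Or.inr rfl

namespace IsDualPair

variable {e : M × Module.Dual R M}

lemma apply_of_ne_zero (he : IsDualPair e) (h : e ≠ 0) : e.2 e.1 = 1 := he.resolve_right h

lemma eq_smul_of_mem_span (he : IsDualPair e) {y : M} (hy : y ∈ R ∙ e.1) : y = e.2 y • e.1 := by
  obtain ⟨c, rfl⟩ := mem_span_singleton.mp hy
  rcases he with h | rfl <;> simp [*]

lemma sub_mem_ker (he : IsDualPair e) (y : M) : y - e.2 y • e.1 ∈ LinearMap.ker e.2 := by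
  rcases he with h | rfl <;> simp [*]

end IsDualPair

/-- The rank-one endomorphisms `e` and `e'` commute with `f` on `A`. -/
def Intertwines (f : M →ₗ[R] N) (A : Submodule R M) (e : M × Module.Dual R M)
    (e' : N × Module.Dual R N) : Prop :=
  ∀ y ∈ A, e'.2 (f y) • e'.1 = e.2 y • f e.1

namespace Intertwines

variable {f : M →ₗ[R] N} {A : Submodule R M} {e : M × Module.Dual R M} {e' : N × Module.Dual R N}

lemma map_mem_span (h : Intertwines f A e e') (he : IsDualPair e) (hA : e.1 ∈ A) :
    f e.1 ∈ R ∙ e'.1 := by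
  rcases he with h1 | rfl
  · exact mem_span_singleton.mpr ⟨_, by simpa [h1] using h e.1 hA⟩
  · simp

lemma map_mem_ker (h : Intertwines f A e e') (he' : IsDualPair e') {y : M} (hA : y ∈ A)
    (hy : e.2 y = 0) : e'.2 (f y) = 0 := by
  rcases he' with h1 | rfl
  · simpa [hy, h1] using congrArg e'.2 (h y hA)
  · simp

lemma of_eq_bot (hA : A = ⊥) : Intertwines f A e e' := fun y hy => by
  simp [(mem_bot R).mp (hA ▸ hy)]

lemma zero_right (h : f e.1 = 0) : Intertwines f A e 0 := fun y _ => by simp [h]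

end Intertwines

/-- The image of a subspace under a linear relation. -/
def relImage (Γ : Submodule R (M × N)) (Z : Submodule R M) : Submodule R N :=
  (Γ ⊓ Z.comap (LinearMap.fst R M N)).map (LinearMap.snd R M N)

lemma mem_relImage {Γ : Submodule R (M × N)} {Z : Submodule R M} {z : N} :
    z ∈ relImage Γ Z ↔ ∃ y ∈ Z, (y, z) ∈ Γ := by
  simp [relImage, and_comm]

lemma relImage_mono {Γ : Submodule R (M × N)} {Z A : Submodule R M} (h : Z ≤ A) :
    relImage Γ Z ≤ relImage Γ A :=
  map_mono (inf_le_inf_left Γ (comap_mono h))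

lemma not_relImage_le {Γ : Submodule R (M × N)} {Z A : Submodule R M} (hZA : Z ≤ A)
    (hker : ∀ x ∈ A, (x, 0) ∈ Γ → x ∈ Z) (hdom : ¬A ⊓ Γ.map (LinearMap.fst R M N) ≤ Z) :
    ¬relImage Γ A ≤ relImage Γ Z := by
  intro hle
  refine hdom fun x ⟨hxA, hx⟩ => ?_
  obtain ⟨⟨x, z⟩, hxz, rfl⟩ := hx
  obtain ⟨y, hyZ, hyz⟩ := mem_relImage.mp (hle (mem_relImage.mpr ⟨x, hxA, hxz⟩))
  have hsub : x - y ∈ Z := hker _ (A.sub_mem hxA (hZA hyZ)) (by simpa using Γ.sub_mem hxz hyz)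
  exact (Z.sub_mem_iff_left hyZ).mp hsub

/-- Two functionals agree on a linear relation: they descend to a single functional on the pushout
of its two projections. -/
def AgreeOn (Γ : Submodule R (M × N)) (φ : Module.Dual R M) (ψ : Module.Dual R N) : Prop :=
  ∀ z ∈ Γ, φ z.1 = ψ z.2

/-- The projections `e` and `e'` form an endomorphism of the relation `Γ`, viewed as a
representation `M ← Γ → N`: their vectors are related, or their functionals agree on `Γ`. When
neither vanishes both hold. -/
def Linked (Γ : Submodule R (M × N)) (e : M × Module.Dual R M) (e' : N × Module.Dual R N) : Prop :=
  ((e.1, e'.1) ∈ Γ ∨ AgreeOn Γ e.2 e'.2) ∧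
    (e ≠ 0 → e' ≠ 0 → (e.1, e'.1) ∈ Γ ∧ AgreeOn Γ e.2 e'.2)

lemma linked_zero_zero (Γ : Submodule R (M × N)) : Linked Γ 0 0 :=
  ⟨Or.inl Γ.zero_mem, fun h => absurd rfl h⟩

/-- The relation `a y = b z` between `y ∈ A` and `z ∈ B`. -/
def fiberProduct (a : M →ₗ[R] P) (b : N →ₗ[R] P) (A : Submodule R M) (B : Submodule R N) :
    Submodule R (M × N) :=
  A.prod B ⊓ LinearMap.eqLocus (a ∘ₗ LinearMap.fst R M N) (b ∘ₗ LinearMap.snd R M N)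

lemma mem_fiberProduct {a : M →ₗ[R] P} {b : N →ₗ[R] P} {A : Submodule R M} {B : Submodule R N}
    {z : M × N} :
    z ∈ fiberProduct a b A B ↔ (z.1 ∈ A ∧ z.2 ∈ B) ∧ a z.1 = b z.2 := by
  simp [fiberProduct]

end RankOneProjections

section VectorSpaces

variable {𝕜 M N P : Type*} [Field 𝕜] [AddCommGroup M] [Module 𝕜 M] [AddCommGroup N] [Module 𝕜 N]
  [AddCommGroup P] [Module 𝕜 P]

lemma exists_dual_eq_one_of_notMem {Z : Submodule 𝕜 M} {x : M} (hx : x ∉ Z) :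
    ∃ φ : Module.Dual 𝕜 M, φ x = 1 ∧ Z ≤ LinearMap.ker φ := by
  obtain ⟨φ, hφx, hφ⟩ := Z.exists_le_ker_of_notMem hx
  refine ⟨(φ x)⁻¹ • φ, by simp [hφx], fun z hz => ?_⟩
  simp [LinearMap.mem_ker.mp (hφ hz)]

lemma exists_dual_comp_eq_of_ker_le (g : M →ₗ[𝕜] N) {χ : Module.Dual 𝕜 M}
    (h : LinearMap.ker g ≤ LinearMap.ker χ) : ∃ ψ : Module.Dual 𝕜 N, ψ ∘ₗ g = χ := by
  have hχ : χ ∈ LinearMap.range g.dualMap := by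
    rw [LinearMap.range_dualMap_eq_dualAnnihilator_ker, Submodule.mem_dualAnnihilator]
    exact fun x hx => h hx
  exact hχ

lemma map_span_singleton_eq_bot_or {f : M →ₗ[𝕜] N} {v : M} {w : N}
    (h : (𝕜 ∙ v).map f ≤ 𝕜 ∙ w) :
    (𝕜 ∙ v).map f = ⊥ ∨ (𝕜 ∙ v).map f = 𝕜 ∙ w ∧ Disjoint (LinearMap.ker f) (𝕜 ∙ v) := by
  rw [map_span, Set.image_singleton] at h ⊢
  rcases eq_or_ne (f v) 0 with hv | hv
  · exact Or.inl (by simp [hv])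
  · obtain ⟨c, hc⟩ := mem_span_singleton.mp ((span_singleton_le_iff_mem _ _).mp h)
    have hc0 : c ≠ 0 := fun h0 => hv (by simp [← hc, h0])
    refine Or.inr ⟨?_, disjoint_def.mpr fun x hx hxv => ?_⟩
    · rw [← hc, span_singleton_smul_eq hc0.isUnit]
    · obtain ⟨t, rfl⟩ := mem_span_singleton.mp hxv
      have ht : t = 0 := by simpa [hv] using hx
      simp [ht]

lemma IsDualPair.fst_ne_zero {e : M × Module.Dual 𝕜 M} (he : IsDualPair e) (h : e ≠ 0) :
    e.1 ≠ 0 := fun h0 => by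
  simpa [h0] using he.apply_of_ne_zero h

lemma exists_agreeOn_of_relImage_le_ker {Γ : Submodule 𝕜 (M × N)} {Z : Submodule 𝕜 M}
    {ψ : Module.Dual 𝕜 N} (h : relImage Γ Z ≤ LinearMap.ker ψ) :
    ∃ φ : Module.Dual 𝕜 M, AgreeOn Γ φ ψ ∧ Z ≤ LinearMap.ker φ := by
  obtain ⟨φ, hφ⟩ := exists_dual_comp_eq_of_ker_le
    (Z.mkQ ∘ₗ LinearMap.fst 𝕜 M N ∘ₗ Γ.subtype) (χ := ψ ∘ₗ LinearMap.snd 𝕜 M N ∘ₗ Γ.subtype)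
    fun z hz => h (mem_relImage.mpr ⟨z.1.1, by simpa using hz, z.2⟩)
  refine ⟨φ ∘ₗ Z.mkQ, fun z hz => LinearMap.congr_fun hφ ⟨z, hz⟩, fun z hz => ?_⟩
  simp [(Submodule.Quotient.mk_eq_zero Z).mpr hz]

variable {a : M →ₗ[𝕜] P} {b : N →ₗ[𝕜] P} {A : Submodule 𝕜 M} {B : Submodule 𝕜 N}
  {e : M × Module.Dual 𝕜 M} {e' : N × Module.Dual 𝕜 N}

lemma AgreeOn.exists_extension {φ : Module.Dual 𝕜 M} {φ' : Module.Dual 𝕜 N}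
    (h : AgreeOn (fiberProduct a b A B) φ φ') :
    ∃ ψ : Module.Dual 𝕜 P, (∀ y ∈ A, ψ (a y) = φ y) ∧ ∀ z ∈ B, ψ (b z) = φ' z := by
  obtain ⟨ψ, hψ⟩ := exists_dual_comp_eq_of_ker_le
    ((a ∘ₗ A.subtype).coprod (b ∘ₗ B.subtype)) (χ := (φ ∘ₗ A.subtype).coprod (φ' ∘ₗ B.subtype))
    fun z hz => by
      have hz' : a z.1 = b (-z.2 : B) := by simpa [add_eq_zero_iff_eq_neg] using hz
      simpa [add_eq_zero_iff_eq_neg] using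
        h (z.1, (-z.2 : B)) (mem_fiberProduct.mpr ⟨⟨z.1.2, (-z.2).2⟩, hz'⟩)
  refine ⟨ψ, fun y hy => ?_, fun z hz => ?_⟩
  · simpa using LinearMap.congr_fun hψ (⟨y, hy⟩, 0)
  · simpa using LinearMap.congr_fun hψ (0, ⟨z, hz⟩)

lemma Linked.map_ne_zero (h : Linked (fiberProduct a b A B) e e') (he : IsDualPair e)
    (heA : e.1 ∈ A) (h0 : e ≠ 0) (h0' : e' ≠ 0) : a e.1 ≠ 0 ∧ b e'.1 ≠ 0 := by
  obtain ⟨hΓ, hagree⟩ := h.2 h0 h0'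
  have hab := (mem_fiberProduct.mp hΓ).2
  have ha : a e.1 ≠ 0 := fun ha => by
    have := hagree (e.1, 0) (mem_fiberProduct.mpr ⟨⟨heA, B.zero_mem⟩, by simp [ha]⟩)
    simp [he.apply_of_ne_zero h0] at this
  exact ⟨ha, hab ▸ ha⟩

lemma Linked.exists_intertwines (h : Linked (fiberProduct a b A B) e e')
    (he : IsDualPair e) (he' : IsDualPair e') (heA : e.1 ∈ A) (heB : e'.1 ∈ B) :
    ∃ t : P × Module.Dual 𝕜 P, IsDualPair t ∧ Intertwines a A e t ∧ Intertwines b B e' t ∧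
      (t.1 = a e.1 ∨ t.1 = b e'.1) := by
  by_cases hagree : AgreeOn (fiberProduct a b A B) e.2 e'.2
  · obtain ⟨ψ, hψa, hψb⟩ := hagree.exists_extension
    rcases eq_or_ne e 0 with rfl | h0 <;> rcases eq_or_ne e' 0 with rfl | h0'
    · exact ⟨0, .zero, by simp [Intertwines], by simp [Intertwines], by simp⟩
    · exact ⟨(b e'.1, ψ), Or.inl ((hψb _ heB).trans (he'.apply_of_ne_zero h0')),
        fun y hy => by simp [hψa y hy], fun z hz => by simp [hψb z hz], Or.inr rfl⟩
    · exact ⟨(a e.1, ψ), Or.inl ((hψa _ heA).trans (he.apply_of_ne_zero h0)),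
        fun y hy => by simp [hψa y hy], fun z hz => by simp [hψb z hz], Or.inl rfl⟩
    · have hab := (mem_fiberProduct.mp (h.2 h0 h0').1).2
      exact ⟨(a e.1, ψ), Or.inl ((hψa _ heA).trans (he.apply_of_ne_zero h0)),
        fun y hy => by simp [hψa y hy], fun z hz => by simp [hψb z hz, hab], Or.inl rfl⟩
  · have hab := (mem_fiberProduct.mp (h.1.resolve_right hagree)).2
    have hzero : e = 0 ∨ e' = 0 := by
      by_contra! hne
      exact hagree (h.2 hne.1 hne.2).2
    have ha : a e.1 = 0 := hzero.elim (fun h0 => by simp [h0]) fun h0 => by simpa [h0] using hab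
    have hb : b e'.1 = 0 := hab ▸ ha
    exact ⟨0, .zero, by simp [Intertwines, ha], by simp [Intertwines, hb], by simp [ha]⟩

end VectorSpaces

section Threads

variable {𝕜 M : Type*} [Field 𝕜] [AddCommGroup M] [Module 𝕜 M] {K : ℤ → Submodule 𝕜 M}
  {Γ : ℤ → Submodule 𝕜 (M × M)} {n : ℤ}

/-- A thread is an endomorphism of the sequence of relations `Γ p` between `K p` and `K (p + 1)`,
`p ≥ n`, that is a projection onto a string of lines occupying an interval starting at `n`
(or onto zero). -/
structure IsThread (K : ℤ → Submodule 𝕜 M) (Γ : ℤ → Submodule 𝕜 (M × M)) (n : ℤ)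
    (E : ℤ → M × Module.Dual 𝕜 M) : Prop where
  mem : ∀ p, (E p).1 ∈ K p
  isDualPair : ∀ p, IsDualPair (E p)
  linked : ∀ p, n ≤ p → Linked (Γ p) (E p) (E (p + 1))
  eq_zero_of_lt : ∀ p < n, E p = 0
  ne_zero_of_succ : ∀ p, n ≤ p → E (p + 1) ≠ 0 → E p ≠ 0

namespace IsThread

lemma zero (K : ℤ → Submodule 𝕜 M) (Γ : ℤ → Submodule 𝕜 (M × M)) (n : ℤ) : IsThread K Γ n 0 where
  mem p := (K p).zero_mem
  isDualPair _ := .zero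
  linked p _ := linked_zero_zero (Γ p)
  eq_zero_of_lt _ _ := rfl
  ne_zero_of_succ _ _ h := h

lemma cons {E : ℤ → M × Module.Dual 𝕜 M} (hE : IsThread K Γ (n + 1) E) {e : M × Module.Dual 𝕜 M}
    (heK : e.1 ∈ K n) (he : e.2 e.1 = 1) (hlink : Linked (Γ n) e (E (n + 1))) :
    IsThread K Γ n (Function.update E n e) where
  mem p := by
    rcases eq_or_ne p n with rfl | hp
    · simpa using heK
    · simpa [hp] using hE.mem p
  isDualPair p := by
    rcases eq_or_ne p n with rfl | hp
    · simpa [IsDualPair] using Or.inl he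
    · simpa [hp] using hE.isDualPair p
  linked p hp := by
    rcases hp.eq_or_lt with rfl | hp
    · simpa using hlink
    · simpa [hp.ne', (hp.trans (lt_add_one p)).ne'] using hE.linked p hp
  eq_zero_of_lt p hp := by simpa [hp.ne] using hE.eq_zero_of_lt p (hp.trans (lt_add_one n))
  ne_zero_of_succ p hp := by
    rcases hp.eq_or_lt with rfl | hp
    · intro _ h
      simp [show e = 0 by simpa using h] at he
    · simpa [hp.ne', (hp.trans (lt_add_one p)).ne'] using hE.ne_zero_of_succ p hp

end IsThread

/-- Either a vector of `A \ Z` is related to zero, and the thread stops; or the vectors of `A` with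
a partner all lie in `Z`, and some functional killing them stops the thread; or the relation carries
`Z ≤ A` to a proper inclusion and the thread continues. -/
lemma exists_isThread_of_not_le (hΓ : ∀ p, Γ p ≤ (K p).prod (K (p + 1))) {m : ℕ}
    (hm : K (n + m) = ⊥) {A Z : Submodule 𝕜 M} (hZA : Z ≤ A) (hAK : A ≤ K n) (hAZ : ¬A ≤ Z) :
    ∃ E, IsThread K Γ n E ∧ (E n).1 ∈ A ∧ Z ≤ LinearMap.ker (E n).2 ∧ (E n).2 (E n).1 = 1 := by
  induction m generalizing n A Z with
  | zero => simp_all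
  | succ m ih =>
    suffices ∃ E, IsThread K Γ (n + 1) E ∧ ∃ x ∈ A, ∃ φ : Module.Dual 𝕜 M,
        Z ≤ LinearMap.ker φ ∧ φ x = 1 ∧ Linked (Γ n) (x, φ) (E (n + 1)) by
      obtain ⟨E, hE, x, hx, φ, hφZ, hφx, hlink⟩ := this
      exact ⟨_, hE.cons (hAK hx) hφx hlink, by simpa using ⟨hx, hφZ, hφx⟩⟩
    by_cases hker : ∀ x ∈ A, (x, 0) ∈ Γ n → x ∈ Z
    · by_cases hdom : A ⊓ (Γ n).map (LinearMap.fst 𝕜 M M) ≤ Z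
      · obtain ⟨x, hxA, hx⟩ := SetLike.not_le_iff_exists.mp fun h =>
          hAZ (eq_of_le_of_inf_le_of_le_sup hZA hdom h).ge
        obtain ⟨φ, hφx, hφ⟩ := exists_dual_eq_one_of_notMem hx
        have hagree : AgreeOn (Γ n) φ 0 := fun z hz =>
          hφ (mem_sup_right (mem_map_of_mem (f := LinearMap.fst 𝕜 M M) hz))
        exact ⟨0, .zero K Γ _, x, hxA, φ, le_sup_left.trans hφ, hφx, Or.inr hagree,
          fun _ h => absurd rfl h⟩
      · have hΓA : relImage (Γ n) A ≤ K (n + 1) := fun z hz => by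
          obtain ⟨y, -, hyz⟩ := mem_relImage.mp hz
          exact (hΓ n hyz).2
        obtain ⟨E, hE, hEA, hEZ, hE1⟩ := ih (by simpa [add_right_comm, add_assoc] using hm)
          (relImage_mono hZA) hΓA (not_relImage_le hZA hker hdom)
        obtain ⟨x, hxA, hx⟩ := mem_relImage.mp hEA
        obtain ⟨φ, hagree, hφ⟩ := exists_agreeOn_of_relImage_le_ker hEZ
        exact ⟨E, hE, x, hxA, φ, hφ, (hagree _ hx).trans hE1, Or.inl hx, fun _ _ => ⟨hx, hagree⟩⟩
    · push Not at hker
      obtain ⟨x, hxA, hx0, hxZ⟩ := hker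
      obtain ⟨φ, hφx, hφ⟩ := exists_dual_eq_one_of_notMem hxZ
      exact ⟨0, .zero K Γ _, x, hxA, φ, hφ, hφx, Or.inl hx0, fun _ h => absurd rfl h⟩

lemma IsThread.linked_of_linked_zero {E : ℤ → M × Module.Dual 𝕜 M} (hE : IsThread K Γ n E)
    (h : Linked (Γ (n - 1)) 0 (E n)) (p : ℤ) : Linked (Γ p) (E p) (E (p + 1)) := by
  rcases lt_trichotomy p (n - 1) with hp | rfl | hp
  · rw [hE.eq_zero_of_lt p (by lia), hE.eq_zero_of_lt (p + 1) (by lia)]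
    exact linked_zero_zero _
  · rwa [hE.eq_zero_of_lt (n - 1) (by lia), sub_add_cancel]
  · exact hE.linked p (by lia)

/-- At its starting point the thread must be compatible with `K (n - 1) = ⊥`: its vector lies in
`ker b`, or its functional kills `ker b`. -/
lemma exists_isThread_fiberProduct {P : Type*} [AddCommGroup P] [Module 𝕜 P] {a b : M →ₗ[𝕜] P}
    (hn : K n ≠ ⊥) (hpre : K (n - 1) = ⊥) {m : ℕ} (hm : K (n + m) = ⊥) :
    ∃ E, IsThread K (fun p => fiberProduct a b (K p) (K (p + 1))) n E ∧ E n ≠ 0 ∧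
      ∀ p, Linked (fiberProduct a b (K p) (K (p + 1))) (E p) (E (p + 1)) := by
  suffices ∃ E, IsThread K (fun p => fiberProduct a b (K p) (K (p + 1))) n E ∧
      (E n).2 (E n).1 = 1 ∧ (b (E n).1 = 0 ∨ K n ⊓ LinearMap.ker b ≤ LinearMap.ker (E n).2) by
    obtain ⟨E, hE, hE1, hb⟩ := this
    refine ⟨E, hE, fun h0 => by simp [h0] at hE1,
      hE.linked_of_linked_zero ⟨?_, fun h => absurd rfl h⟩⟩
    rw [sub_add_cancel]
    refine hb.imp (fun h0 => ?_) fun hker z hz => ?_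
    · exact mem_fiberProduct.mpr ⟨⟨zero_mem _, hE.mem n⟩, by simp [h0]⟩
    · obtain ⟨⟨hz1, hz2⟩, hz⟩ := mem_fiberProduct.mp hz
      have hz0 : z.1 = 0 := by simpa [hpre] using hz1
      simpa using (hker ⟨hz2, by simpa [hz0] using hz.symm⟩).symm
  have hΓ (p : ℤ) : fiberProduct a b (K p) (K (p + 1)) ≤ (K p).prod (K (p + 1)) := inf_le_left
  by_cases hker : K n ≤ LinearMap.ker b
  · obtain ⟨E, hE, hEn, -, hE1⟩ := exists_isThread_of_not_le hΓ hm bot_le le_rfl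
      (fun h => hn (le_bot_iff.mp h))
    exact ⟨E, hE, hE1, Or.inl (hker hEn)⟩
  · obtain ⟨E, hE, -, hEZ, hE1⟩ := exists_isThread_of_not_le hΓ hm
      (Z := K n ⊓ LinearMap.ker b) inf_le_left le_rfl (fun h => hker (h.trans inf_le_right))
    exact ⟨E, hE, hE1, Or.inr hEZ⟩

end Threads

section Lattice

variable {α : Type*} [CompleteLattice α] [IsModularLattice α]

lemma iSupIndep_option_elim {ι : Type*} {t : ι → α} {b : α} (ht : iSupIndep t)
    (hb : Disjoint b (⨆ i, t i)) : iSupIndep fun o : Option ι => o.elim b t := by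
  rw [iSupIndep_def]
  rintro (_ | i)
  · simpa [iSup_option] using hb
  · have hi : Disjoint (t i ⊔ ⨆ (j) (_ : j ≠ i), t j) b :=
      (hb.mono_right (sup_le (le_iSup t i) (iSup₂_le fun j _ => le_iSup t j))).symm
    simpa [iSup_option, sup_comm b] using (ht i).disjoint_sup_right_of_disjoint_sup_left hi

lemma exists_iSupIndep_of_forall_exists_disjoint [WellFoundedLT α] {P Q : α → Prop}
    (h : ∀ a, Q a → a ≠ ⊥ → ∃ b c, P b ∧ Q c ∧ b ≠ ⊥ ∧ Disjoint b c ∧ b ⊔ c = a)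
    {a : α} (ha : Q a) :
    ∃ (ι : Type) (t : ι → α), iSupIndep t ∧ ⨆ i, t i = a ∧ ∀ i, P (t i) := by
  induction a using WellFoundedLT.induction with
  | ind a ih =>
    rcases eq_or_ne a ⊥ with rfl | ha0
    · exact ⟨Empty, Empty.elim, iSupIndep_subsingleton _, by simp, by simp⟩
    · obtain ⟨b, c, hb, hc, hb0, hbc, rfl⟩ := h a ha ha0
      have hlt : c < b ⊔ c := right_lt_sup.mpr fun hle => hb0 (hbc.eq_bot_of_le hle)
      obtain ⟨ι, t, ht, rfl, hP⟩ := ih c hlt hc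
      exact ⟨Option ι, fun o => o.elim b t, iSupIndep_option_elim ht hbc, by simp [iSup_option],
        Option.rec hb hP⟩

end Lattice

section HomogeneousSums

variable {ι R M : Type*} [DecidableEq ι] [Ring R] [AddCommGroup M] [Module R M]
  {K A B : ι → Submodule R M}

lemma decompose_mem_of_mem_iSup [DirectSum.Decomposition K] (hA : ∀ i, A i ≤ K i) {x : M}
    (hx : x ∈ ⨆ i, A i) (i : ι) : (DirectSum.decompose K x i : M) ∈ A i := by
  induction hx using Submodule.iSup_induction' with
  | mem j y hy =>
    rcases eq_or_ne j i with rfl | hji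
    · rwa [DirectSum.decompose_of_mem_same K (hA _ hy)]
    · simp [DirectSum.decompose_of_mem_ne K (hA _ hy) hji]
  | zero => simp
  | add y z _ _ hy hz => simpa using (A i).add_mem hy hz

lemma iSup_inf_eq_of_isInternal (hK : DirectSum.IsInternal K) (hA : ∀ i, A i ≤ K i) (i : ι) :
    (⨆ i, A i) ⊓ K i = A i := by
  let := hK.chooseDecomposition
  refine le_antisymm (fun x ⟨hx, hxK⟩ => ?_) (le_inf (le_iSup A i) (hA i))
  simpa [DirectSum.decompose_of_mem_same K hxK] using decompose_mem_of_mem_iSup hA hx i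

lemma disjoint_iSup_of_isInternal (hK : DirectSum.IsInternal K) (hA : ∀ i, A i ≤ K i)
    (hB : ∀ i, B i ≤ K i) (h : ∀ i, Disjoint (A i) (B i)) : Disjoint (⨆ i, A i) (⨆ i, B i) := by
  let := hK.chooseDecomposition
  refine disjoint_def.mpr fun x hxA hxB => (DirectSum.decompose K).injective ?_
  ext i
  simpa using disjoint_def.mp (h i) _ (decompose_mem_of_mem_iSup hA hxA i)
    (decompose_mem_of_mem_iSup hB hxB i)

end HomogeneousSums

namespace DoubleComplex

variable {V : Type*} [AddCommGroup V] [Module ℂ V] {D : DoubleComplex V} {W : Submodule ℂ V}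
  {A B : ℤ → ℤ → Submodule ℂ V}

lemma d2_d1_apply (x : V) : D.d2 (D.d1 x) = -D.d1 (D.d2 x) :=
  eq_neg_of_add_eq_zero_right (D.anticomm_apply x)

lemma iSup_inf_K (hA : ∀ p q, A p q ≤ D.K p q) (p q : ℤ) :
    (⨆ p, ⨆ q, A p q) ⊓ D.K p q = A p q := by
  simpa [iSup_prod] using iSup_inf_eq_of_isInternal D.isInternal
    (A := fun pq => A pq.1 pq.2) (fun pq => hA pq.1 pq.2) (p, q)

lemma disjoint_iSup_iSup (hA : ∀ p q, A p q ≤ D.K p q) (hB : ∀ p q, B p q ≤ D.K p q)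
    (h : ∀ p q, Disjoint (A p q) (B p q)) : Disjoint (⨆ p, ⨆ q, A p q) (⨆ p, ⨆ q, B p q) := by
  simpa [iSup_prod] using disjoint_iSup_of_isInternal D.isInternal
    (A := fun pq => A pq.1 pq.2) (B := fun pq => B pq.1 pq.2)
    (fun pq => hA pq.1 pq.2) (fun pq => hB pq.1 pq.2) fun pq => h pq.1 pq.2

lemma isSubcomplex_iSup (hA : ∀ p q, A p q ≤ D.K p q)
    (h1 : ∀ p q, (A p q).map D.d1 ≤ A (p + 1) q) (h2 : ∀ p q, (A p q).map D.d2 ≤ A p (q + 1)) :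
    D.IsSubcomplex (⨆ p, ⨆ q, A p q) := by
  refine ⟨?_, ?_, by simp only [iSup_inf_K hA]⟩
  · simp only [Submodule.map_iSup]
    exact iSup₂_le fun p q => (h1 p q).trans (le_iSup₂ (f := A) (p + 1) q)
  · simp only [Submodule.map_iSup]
    exact iSup₂_le fun p q => (h2 p q).trans (le_iSup₂ (f := A) p (q + 1))

lemma isSubcomplex_top : D.IsSubcomplex ⊤ := by
  have hK : ⨆ p, ⨆ q, D.K p q = ⊤ := by
    simpa [iSup_prod] using D.isInternal.submodule_iSup_eq_top
  exact ⟨le_top, le_top, by simpa using hK.symm⟩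

namespace IsSubcomplex

lemma d1_mem_inf_K (hW : D.IsSubcomplex W) {p q : ℤ} {x : V} (hx : x ∈ W ⊓ D.K p q) :
    D.d1 x ∈ W ⊓ D.K (p + 1) q :=
  ⟨hW.1 (mem_map_of_mem hx.1), D.d1_mem p q x hx.2⟩

lemma d2_mem_inf_K (hW : D.IsSubcomplex W) {p q : ℤ} {x : V} (hx : x ∈ W ⊓ D.K p q) :
    D.d2 x ∈ W ⊓ D.K p (q + 1) :=
  ⟨hW.2.1 (mem_map_of_mem hx.1), D.d2_mem p q x hx.2⟩

lemma exists_inf_K_ne_bot (hW : D.IsSubcomplex W) (h0 : W ≠ ⊥) : ∃ p q, W ⊓ D.K p q ≠ ⊥ := by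
  by_contra! h
  exact h0 (hW.2.2.trans (by simp [h]))

end IsSubcomplex

/-- A bigraded family of projections `e p q` onto lines (or zero) of `W` that commutes with both
differentials of `W`, and hence splits off the sum of these lines as a subcomplex. -/
structure IsSplitting (D : DoubleComplex V) (W : Submodule ℂ V)
    (e : ℤ → ℤ → V × Module.Dual ℂ V) : Prop where
  mem : ∀ p q, (e p q).1 ∈ W ⊓ D.K p q
  isDualPair : ∀ p q, IsDualPair (e p q)
  intertwines_d1 : ∀ p q, Intertwines D.d1 (W ⊓ D.K p q) (e p q) (e (p + 1) q)
  intertwines_d2 : ∀ p q, Intertwines D.d2 (W ⊓ D.K p q) (e p q) (e p (q + 1))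

/-- The sum of the lines onto which a bigraded family projects. -/
def lineSum (e : ℤ → ℤ → V × Module.Dual ℂ V) : Submodule ℂ V := ⨆ p, ⨆ q, ℂ ∙ (e p q).1

namespace IsSplitting

variable {e : ℤ → ℤ → V × Module.Dual ℂ V}

lemma span_le_inf_K (h : D.IsSplitting W e) (p q : ℤ) : ℂ ∙ (e p q).1 ≤ W ⊓ D.K p q :=
  (span_singleton_le_iff_mem _ _).mpr (h.mem p q)

lemma lineSum_inf_K (h : D.IsSplitting W e) (p q : ℤ) : lineSum e ⊓ D.K p q = ℂ ∙ (e p q).1 :=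
  iSup_inf_K (fun p q => (h.span_le_inf_K p q).trans inf_le_right) p q

lemma lineSum_ne_bot (h : D.IsSplitting W e) {p q : ℤ} (h0 : e p q ≠ 0) : lineSum e ≠ ⊥ :=
  fun hbot => (h.isDualPair p q).fst_ne_zero h0 <| by
    simpa [hbot] using (h.lineSum_inf_K p q).symm

lemma finrank_lineSum_inf_K (h : D.IsSplitting W e) {p q : ℤ} (h0 : (e p q).1 ≠ 0) :
    Module.finrank ℂ ↥(lineSum e ⊓ D.K p q) = 1 := by
  rw [h.lineSum_inf_K, finrank_span_singleton h0]

lemma map_d1_span_le (h : D.IsSplitting W e) (p q : ℤ) :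
    (ℂ ∙ (e p q).1).map D.d1 ≤ ℂ ∙ (e (p + 1) q).1 := by
  rw [map_span, Set.image_singleton, span_singleton_le_iff_mem]
  exact (h.intertwines_d1 p q).map_mem_span (h.isDualPair p q) (h.mem p q)

lemma map_d2_span_le (h : D.IsSplitting W e) (p q : ℤ) :
    (ℂ ∙ (e p q).1).map D.d2 ≤ ℂ ∙ (e p (q + 1)).1 := by
  rw [map_span, Set.image_singleton, span_singleton_le_iff_mem]
  exact (h.intertwines_d2 p q).map_mem_span (h.isDualPair p q) (h.mem p q)

lemma isSubcomplex_lineSum (h : D.IsSplitting W e) : D.IsSubcomplex (lineSum e) :=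
  isSubcomplex_iSup (fun p q => (h.span_le_inf_K p q).trans inf_le_right) h.map_d1_span_le
    h.map_d2_span_le

lemma exists_isSubcomplex_complement (h : D.IsSplitting W e) (hW : D.IsSubcomplex W) :
    ∃ W', D.IsSubcomplex W' ∧ Disjoint (lineSum e) W' ∧ lineSum e ⊔ W' = W := by
  let C (p q : ℤ) : Submodule ℂ V := W ⊓ D.K p q ⊓ LinearMap.ker (e p q).2
  have hCK (p q) : C p q ≤ D.K p q := inf_le_left.trans inf_le_right
  refine ⟨⨆ p, ⨆ q, C p q, isSubcomplex_iSup hCK ?_ ?_, ?_, le_antisymm ?_ ?_⟩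
  · rintro p q _ ⟨y, ⟨hy, hy0⟩, rfl⟩
    exact ⟨hW.d1_mem_inf_K hy, (h.intertwines_d1 p q).map_mem_ker (h.isDualPair _ _) hy hy0⟩
  · rintro p q _ ⟨y, ⟨hy, hy0⟩, rfl⟩
    exact ⟨hW.d2_mem_inf_K hy, (h.intertwines_d2 p q).map_mem_ker (h.isDualPair _ _) hy hy0⟩
  · refine disjoint_iSup_iSup (fun p q => (h.span_le_inf_K p q).trans inf_le_right) hCK
      fun p q => disjoint_def.mpr fun y hy hyC => ?_
    rw [(h.isDualPair p q).eq_smul_of_mem_span hy, LinearMap.mem_ker.mp hyC.2, zero_smul]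
  · exact sup_le (iSup₂_le fun p q => (h.span_le_inf_K p q).trans inf_le_left)
      (iSup₂_le fun p q => inf_le_left.trans inf_le_left)
  · rw [hW.2.2]
    refine iSup₂_le fun p q y hy => ?_
    rw [← add_sub_cancel ((e p q).2 y • (e p q).1) y]
    refine add_mem_sup ?_ ?_
    · exact le_iSup₂ (f := fun p q => ℂ ∙ (e p q).1) p q (mem_span_singleton.mpr ⟨_, rfl⟩)
    · exact le_iSup₂ (f := C) p q ⟨sub_mem hy (smul_mem _ _ (h.mem p q)),
        (h.isDualPair p q).sub_mem_ker y⟩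

end IsSplitting

section Square

/-- The projections onto the four corners of the square generated by `y` in bidegree `(p₀, q₀)`
determined by a functional `f` with `f (∂∂̄y) = 1`. The sign comes from anticommutativity. -/
def squareFamily (D : DoubleComplex V) (p₀ q₀ : ℤ) (y : V) (f : Module.Dual ℂ V) (p q : ℤ) :
    V × Module.Dual ℂ V :=
  if p = p₀ ∧ q = q₀ then (y, f ∘ₗ D.d1 ∘ₗ D.d2)
  else if p = p₀ + 1 ∧ q = q₀ then (D.d1 y, -(f ∘ₗ D.d2))
  else if p = p₀ ∧ q = q₀ + 1 then (D.d2 y, f ∘ₗ D.d1)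
  else if p = p₀ + 1 ∧ q = q₀ + 1 then (D.d1 (D.d2 y), f)
  else 0

variable {p₀ q₀ : ℤ} {y : V} {f : Module.Dual ℂ V}

lemma isSplitting_squareFamily (hW : D.IsSubcomplex W) (hy : y ∈ W ⊓ D.K p₀ q₀)
    (hf : f (D.d1 (D.d2 y)) = 1) : D.IsSplitting W (D.squareFamily p₀ q₀ y f) where
  mem p q := by
    unfold squareFamily
    split_ifs with h h h h
    · exact h.1 ▸ h.2 ▸ hy
    · exact h.1 ▸ h.2 ▸ hW.d1_mem_inf_K hy
    · exact h.1 ▸ h.2 ▸ hW.d2_mem_inf_K hy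
    · exact h.1 ▸ h.2 ▸ hW.d1_mem_inf_K (hW.d2_mem_inf_K hy)
    · exact zero_mem _
  isDualPair p q := by
    unfold squareFamily
    split_ifs <;> simp [IsDualPair, hf, d2_d1_apply]
  intertwines_d1 p q x _ := by
    unfold squareFamily
    split_ifs <;> first | omega | simp [d1_d1_apply, d2_d1_apply]
  intertwines_d2 p q x _ := by
    unfold squareFamily
    split_ifs <;> first | omega | simp [d2_d2_apply, d2_d1_apply]

lemma isSquare_lineSum_squareFamily (hW : D.IsSubcomplex W) (hy : y ∈ W ⊓ D.K p₀ q₀)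
    (hf : f (D.d1 (D.d2 y)) = 1) : D.IsSquare (lineSum (D.squareFamily p₀ q₀ y f)) := by
  have h := isSplitting_squareFamily hW hy hf
  have hd12 : D.d1 (D.d2 y) ≠ 0 := fun h0 => by simp [h0] at hf
  have hd2 : D.d2 y ≠ 0 := fun h0 => by simp [h0] at hd12
  have hd1 : D.d1 y ≠ 0 := fun h0 => by
    simpa [h0, hd12] using D.anticomm_apply y
  have hy0 : y ≠ 0 := fun h0 => by simp [h0] at hd1
  refine ⟨p₀, q₀, fun p q hpq => ?_, h.finrank_lineSum_inf_K ?_, h.finrank_lineSum_inf_K ?_,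
    h.finrank_lineSum_inf_K ?_, h.finrank_lineSum_inf_K ?_, ?maps⟩
  · rw [h.lineSum_inf_K]
    unfold squareFamily
    split_ifs <;> first | omega | simp
  case maps =>
    simp only [h.lineSum_inf_K]
    simp [squareFamily, map_span, d2_d1_apply, ← Set.neg_singleton]
  all_goals simpa [squareFamily]

end Square

section Zigzag

instance (S : Submodule ℂ V) : Std.Symm (D.ZigzagStep S) where
  symm a b h := by
    unfold ZigzagStep at h ⊢
    tauto

namespace IsSplitting

variable {e : ℤ → ℤ → V × Module.Dual ℂ V}

lemma zigzagStep_d1 (h : D.IsSplitting W e) {p q : ℤ} (h0 : D.d1 (e p q).1 ≠ 0) :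
    D.ZigzagStep (lineSum e) (p, q) (p + 1, q) :=
  Or.inl ⟨rfl, by simpa [h.lineSum_inf_K, map_span] using h0⟩

lemma zigzagStep_d2 (h : D.IsSplitting W e) {p q : ℤ} (h0 : D.d2 (e p q).1 ≠ 0) :
    D.ZigzagStep (lineSum e) (p, q) (p, q + 1) :=
  Or.inr (Or.inl ⟨rfl, by simpa [h.lineSum_inf_K, map_span] using h0⟩)

lemma isZigzag_lineSum (h : D.IsSplitting W e) (hne : lineSum e ≠ ⊥) {k : ℤ}
    (hk : ∀ p q, e p q ≠ 0 → p + q = k ∨ p + q = k + 1) {c : ℤ × ℤ}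
    (hc : ∀ p q, e p q ≠ 0 → Relation.ReflTransGen (D.ZigzagStep (lineSum e)) c (p, q)) :
    D.IsZigzag (lineSum e) := by
  have he0 {p q : ℤ} (h0 : lineSum e ⊓ D.K p q ≠ ⊥) : e p q ≠ 0 := fun h1 => by
    simp [h.lineSum_inf_K, h1] at h0
  refine ⟨hne, fun p q => ?_, ⟨k, fun p q h0 => hk p q (he0 h0)⟩, fun p q => ?_, fun p q => ?_,
    fun a b ha hb => ?_⟩
  · rcases eq_or_ne (e p q).1 0 with h0 | h0
    · exact Or.inl (by simp [h.lineSum_inf_K, h0])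
    · exact Or.inr (h.finrank_lineSum_inf_K h0)
  · simpa only [h.lineSum_inf_K] using map_span_singleton_eq_bot_or (h.map_d1_span_le p q)
  · simpa only [h.lineSum_inf_K] using map_span_singleton_eq_bot_or (h.map_d2_span_le p q)
  · exact (symm (hc _ _ (he0 ha))).trans (hc _ _ (he0 hb))

end IsSplitting

/-- The subspace of `W` in bidegree `(p, k - p)`; these are the sources of a zigzag living in total
degrees `k` and `k + 1`. -/
def source (D : DoubleComplex V) (W : Submodule ℂ V) (k p : ℤ) : Submodule ℂ V := W ⊓ D.K p (k - p)

/-- The relation between consecutive sources of having the same image in bidegree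
`(p + 1, k - p)`. -/
noncomputable def sourceRel (D : DoubleComplex V) (W : Submodule ℂ V) (k p : ℤ) :
    Submodule ℂ (V × V) :=
  fiberProduct D.d1 D.d2 (D.source W k p) (D.source W k (p + 1))

/-- The bigraded family with `E p` in bidegree `(p, k - p)` and `T p` in the bidegree
`(p + 1, k - p)` into which `E p` and `E (p + 1)` map. -/
def zigzagFamily (k : ℤ) (E T : ℤ → V × Module.Dual ℂ V) (p q : ℤ) : V × Module.Dual ℂ V :=
  if p + q = k then E p else if p + q = k + 1 then T (p - 1) else 0

/-- `T` consists of projections compatible with the projections `E` of the sources. -/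
structure IsSinkFamily (D : DoubleComplex V) (W : Submodule ℂ V) (k : ℤ)
    (E T : ℤ → V × Module.Dual ℂ V) : Prop where
  isDualPair : ∀ p, IsDualPair (T p)
  intertwines_d1 : ∀ p, Intertwines D.d1 (D.source W k p) (E p) (T p)
  intertwines_d2 : ∀ p, Intertwines D.d2 (D.source W k (p + 1)) (E (p + 1)) (T p)
  fst_eq : ∀ p, (T p).1 = D.d1 (E p).1 ∨ (T p).1 = D.d2 (E (p + 1)).1

variable {k n : ℤ} {E T : ℤ → V × Module.Dual ℂ V}

lemma zigzagFamily_source (p : ℤ) : zigzagFamily k E T p (k - p) = E p := by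
  simp [zigzagFamily]

lemma zigzagFamily_of_lt {p q : ℤ} (h : k + 1 < p + q) : zigzagFamily k E T p q = 0 := by
  simp [zigzagFamily, show p + q ≠ k by lia, h.ne']

lemma exists_isSinkFamily (hE : ∀ p, (E p).1 ∈ D.source W k p) (hdual : ∀ p, IsDualPair (E p))
    (hlink : ∀ p, Linked (D.sourceRel W k p) (E p) (E (p + 1))) :
    ∃ T, D.IsSinkFamily W k E T := by
  choose T h1 h2 h3 h4 using fun p =>
    (hlink p).exists_intertwines (hdual p) (hdual (p + 1)) (hE p) (hE (p + 1))
  exact ⟨T, h1, h2, h3, h4⟩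

namespace IsSinkFamily

lemma mem (hT : D.IsSinkFamily W k E T) (hE : ∀ p, (E p).1 ∈ D.source W k p)
    (hW : D.IsSubcomplex W) (p : ℤ) : (T p).1 ∈ W ⊓ D.K (p + 1) (k - p) := by
  rcases hT.fst_eq p with h | h <;> rw [h]
  · exact hW.d1_mem_inf_K (hE p)
  · simpa [sub_add_eq_sub_sub] using hW.d2_mem_inf_K (hE (p + 1))

lemma d1_eq_zero (hT : D.IsSinkFamily W k E T) (hE : ∀ p, (E p).1 ∈ D.source W k p)
    (hdd : ∀ x ∈ W, D.d1 (D.d2 x) = 0) (p : ℤ) : D.d1 (T p).1 = 0 := by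
  rcases hT.fst_eq p with h | h <;> rw [h]
  · exact D.d1_d1_apply _
  · exact hdd _ (hE _).1

lemma d2_eq_zero (hT : D.IsSinkFamily W k E T) (hE : ∀ p, (E p).1 ∈ D.source W k p)
    (hdd : ∀ x ∈ W, D.d1 (D.d2 x) = 0) (p : ℤ) : D.d2 (T p).1 = 0 := by
  rcases hT.fst_eq p with h | h <;> rw [h]
  · rw [d2_d1_apply, hdd _ (hE _).1, neg_zero]
  · exact D.d2_d2_apply _

end IsSinkFamily

lemma isSplitting_zigzagFamily (hW : D.IsSubcomplex W) (hdd : ∀ x ∈ W, D.d1 (D.d2 x) = 0)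
    (hk : ∀ p q, p + q < k → W ⊓ D.K p q = ⊥) (hE : ∀ p, (E p).1 ∈ D.source W k p)
    (hdual : ∀ p, IsDualPair (E p)) (hT : D.IsSinkFamily W k E T) :
    D.IsSplitting W (zigzagFamily k E T) where
  mem p q := by
    unfold zigzagFamily
    split_ifs with h h
    · simpa [source, ← h] using hE p
    · simpa [show k - (p - 1) = q by lia] using hT.mem hE hW (p - 1)
    · exact zero_mem _
  isDualPair p q := by
    unfold zigzagFamily
    split_ifs
    exacts [hdual p, hT.isDualPair _, .zero]
  intertwines_d1 p q := by
    rcases lt_trichotomy (p + q) k with h | rfl | h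
    · exact .of_eq_bot (hk p q h)
    · simpa [source, zigzagFamily, add_right_comm] using hT.intertwines_d1 p
    · have h0 : zigzagFamily k E T (p + 1) q = 0 := zigzagFamily_of_lt (by lia)
      rw [h0]
      refine .zero_right ?_
      unfold zigzagFamily
      split_ifs
      exacts [by lia, hT.d1_eq_zero hE hdd _, map_zero _]
  intertwines_d2 p q := by
    rcases lt_trichotomy (p + q) k with h | rfl | h
    · exact .of_eq_bot (hk p q h)
    · simpa [source, zigzagFamily, add_assoc] using hT.intertwines_d2 (p - 1)
    · have h0 : zigzagFamily k E T p (q + 1) = 0 := zigzagFamily_of_lt (by lia)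
      rw [h0]
      refine .zero_right ?_
      unfold zigzagFamily
      split_ifs
      exacts [by lia, hT.d2_eq_zero hE hdd _, map_zero _]

lemma IsSplitting.zigzagStep_left (h : D.IsSplitting W (zigzagFamily k E T)) {p : ℤ}
    (h0 : D.d1 (E p).1 ≠ 0) :
    D.ZigzagStep (lineSum (zigzagFamily k E T)) (p, k - p) (p + 1, k - p) :=
  h.zigzagStep_d1 (by rwa [zigzagFamily_source])

lemma IsSplitting.zigzagStep_right (h : D.IsSplitting W (zigzagFamily k E T)) {p : ℤ}
    (h0 : D.d2 (E (p + 1)).1 ≠ 0) :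
    D.ZigzagStep (lineSum (zigzagFamily k E T)) (p + 1, k - (p + 1)) (p + 1, k - p) := by
  have hstep := h.zigzagStep_d2 (by rwa [zigzagFamily_source])
  rwa [show k - (p + 1) + 1 = k - p by ring] at hstep

lemma IsSplitting.reflTransGen_source (h : D.IsSplitting W (zigzagFamily k E T))
    (hE : IsThread (D.source W k) (D.sourceRel W k) n E) {p : ℤ} (h0 : E p ≠ 0) :
    Relation.ReflTransGen (D.ZigzagStep (lineSum (zigzagFamily k E T))) (n, k - n) (p, k - p) := by
  have hp : n ≤ p := not_lt.mp fun hlt => h0 (hE.eq_zero_of_lt p hlt)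
  induction p, hp using Int.leInduction with
  | base => rfl
  | succ p hp ih =>
    have hp0 : E p ≠ 0 := hE.ne_zero_of_succ p hp h0
    obtain ⟨h1, h2⟩ := (hE.linked p hp).map_ne_zero (hE.isDualPair p) (hE.mem p) hp0 h0
    exact ((ih hp0).tail (h.zigzagStep_left h1)).tail (symm (h.zigzagStep_right h2))

lemma IsSplitting.reflTransGen_sink (h : D.IsSplitting W (zigzagFamily k E T))
    (hE : IsThread (D.source W k) (D.sourceRel W k) n E) (hT : D.IsSinkFamily W k E T) {p : ℤ}
    (h0 : T p ≠ 0) :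
    Relation.ReflTransGen (D.ZigzagStep (lineSum (zigzagFamily k E T)))
      (n, k - n) (p + 1, k - p) := by
  have hne := (hT.isDualPair p).fst_ne_zero h0
  rcases hT.fst_eq p with heq | heq <;> rw [heq] at hne
  · exact (h.reflTransGen_source hE fun h1 => by simp [h1] at hne).tail (h.zigzagStep_left hne)
  · exact (h.reflTransGen_source hE fun h1 => by simp [h1] at hne).tail (h.zigzagStep_right hne)

lemma IsSplitting.isZigzag_lineSum_zigzagFamily (h : D.IsSplitting W (zigzagFamily k E T))
    (hE : IsThread (D.source W k) (D.sourceRel W k) n E) (hT : D.IsSinkFamily W k E T)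
    (hEn : E n ≠ 0) :
    D.IsZigzag (lineSum (zigzagFamily k E T)) := by
  refine h.isZigzag_lineSum (h.lineSum_ne_bot (p := n) (q := k - n) ?_) (k := k) (c := (n, k - n))
    (fun p q h0 => ?_) fun p q h0 => ?_
  · rwa [zigzagFamily_source]
  · unfold zigzagFamily at h0
    grind
  · unfold zigzagFamily at h0
    split_ifs at h0 with hpq hpq
    · simpa [show k - p = q by lia] using h.reflTransGen_source hE h0
    · simpa [show k - (p - 1) = q by lia] using h.reflTransGen_sink hE hT h0
    · exact absurd rfl h0

lemma exists_leftmost_source (hb : D.Bounded) (hW : D.IsSubcomplex W) (h0 : W ≠ ⊥) :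
    ∃ k n, D.source W k n ≠ ⊥ ∧ D.source W k (n - 1) = ⊥ ∧
      ∀ p q, p + q < k → W ⊓ D.K p q = ⊥ := by
  obtain ⟨p₀, q₀, hpq⟩ := hW.exists_inf_K_ne_bot h0
  have hfin : {pq : ℤ × ℤ | W ⊓ D.K pq.1 pq.2 ≠ ⊥}.Finite :=
    hb.subset fun pq h hK => h (by simp [hK])
  obtain ⟨⟨n, q⟩, hnq, hmin⟩ := Set.exists_min_image _
    (fun pq : ℤ × ℤ => toLex (pq.1 + pq.2, pq.1)) hfin ⟨(p₀, q₀), hpq⟩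
  have hbot (p q' : ℤ) (h : p + q' < n + q ∨ p + q' = n + q ∧ p < n) : W ⊓ D.K p q' = ⊥ := by
    by_contra hne
    have := Prod.Lex.toLex_le_toLex.mp (hmin (p, q') hne)
    lia
  exact ⟨n + q, n, by simpa [source] using hnq, hbot _ _ (by lia),
    fun p q' h => hbot p q' (Or.inl h)⟩

lemma exists_source_eq_bot (hb : D.Bounded) (W : Submodule ℂ V) (k n : ℤ) :
    ∃ m : ℕ, D.source W k (n + m) = ⊥ := by
  have hinj : Function.Injective fun m : ℕ => (n + m, k - (n + m)) := fun m m' h => by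
    simpa using congrArg Prod.fst h
  obtain ⟨m, hm⟩ := (hb.preimage hinj.injOn).exists_notMem
  exact ⟨m, by simp_all [source]⟩

lemma exists_isSplitting_isZigzag (hb : D.Bounded) (hW : D.IsSubcomplex W) (h0 : W ≠ ⊥)
    (hdd : ∀ x ∈ W, D.d1 (D.d2 x) = 0) : ∃ e, D.IsSplitting W e ∧ D.IsZigzag (lineSum e) := by
  obtain ⟨k, n, hn, hpre, hk⟩ := exists_leftmost_source hb hW h0
  obtain ⟨m, hm⟩ := exists_source_eq_bot hb W k n
  obtain ⟨E, hE, hEn, hlink⟩ := exists_isThread_fiberProduct (a := D.d1) (b := D.d2) hn hpre hm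
  obtain ⟨T, hT⟩ := exists_isSinkFamily hE.mem hE.isDualPair hlink
  have h := isSplitting_zigzagFamily hW hdd hk hE.mem hE.isDualPair hT
  exact ⟨_, h, h.isZigzag_lineSum_zigzagFamily hE hT hEn⟩

end Zigzag

lemma exists_isSplitting_isSquare (hW : D.IsSubcomplex W) (hdd : ¬∀ x ∈ W, D.d1 (D.d2 x) = 0) :
    ∃ e, D.IsSplitting W e ∧ D.IsSquare (lineSum e) := by
  have hy : ∃ p q, ∃ y ∈ W ⊓ D.K p q, D.d1 (D.d2 y) ≠ 0 := by
    by_contra! h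
    have hle : ⨆ p, ⨆ q, W ⊓ D.K p q ≤ LinearMap.ker (D.d1 ∘ₗ D.d2) := iSup₂_le h
    exact hdd fun x hx => hle (hW.2.2 ▸ hx)
  obtain ⟨p, q, y, hy, hy0⟩ := hy
  obtain ⟨f, hf, -⟩ := exists_dual_eq_one_of_notMem (Z := (⊥ : Submodule ℂ V))
    (by simpa using hy0)
  exact ⟨_, isSplitting_squareFamily hW hy hf, isSquare_lineSum_squareFamily hW hy hf⟩

lemma IsSquare.ne_bot {S : Submodule ℂ V} (hS : D.IsSquare S) : S ≠ ⊥ := by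
  obtain ⟨p, q, -, h, -⟩ := hS
  rintro rfl
  rw [bot_inf_eq, finrank_bot] at h
  exact zero_ne_one h

lemma exists_square_or_zigzag_summand (hb : D.Bounded) (hW : D.IsSubcomplex W) (h0 : W ≠ ⊥) :
    ∃ S W', (D.IsSubcomplex S ∧ (D.IsSquare S ∨ D.IsZigzag S)) ∧ D.IsSubcomplex W' ∧ S ≠ ⊥ ∧
      Disjoint S W' ∧ S ⊔ W' = W := by
  obtain ⟨e, he, hS⟩ :
      ∃ e, D.IsSplitting W e ∧ (D.IsSquare (lineSum e) ∨ D.IsZigzag (lineSum e)) := by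
    by_cases hdd : ∀ x ∈ W, D.d1 (D.d2 x) = 0
    · exact (exists_isSplitting_isZigzag hb hW h0 hdd).imp fun e he => ⟨he.1, Or.inr he.2⟩
    · exact (exists_isSplitting_isSquare hW hdd).imp fun e he => ⟨he.1, Or.inl he.2⟩
  obtain ⟨W', hW', hdisj, hsup⟩ := he.exists_isSubcomplex_complement hW
  exact ⟨lineSum e, W', ⟨he.isSubcomplex_lineSum, hS⟩, hW', hS.elim IsSquare.ne_bot And.left,
    hdisj, hsup⟩

end DoubleComplex

open DoubleComplex in
/-- **Structure theorem for double complexes (Khovanov, Stelzig).** Every bounded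
double complex of finite-dimensional complex vector spaces is, as a double complex,
a direct sum of sub-double-complexes each of which is either a square or a zigzag. -/
theorem double_complex_decomposition {V : Type*} [AddCommGroup V] [Module ℂ V]
    [FiniteDimensional ℂ V] (D : DoubleComplex V) (hb : D.Bounded) :
    ∃ (ι : Type) (_ : DecidableEq ι) (S : ι → Submodule ℂ V),
      DirectSum.IsInternal S ∧
      ∀ i : ι, D.IsSubcomplex (S i) ∧ (D.IsSquare (S i) ∨ D.IsZigzag (S i)) := by
  obtain ⟨ι, S, hindep, hsup, hS⟩ := exists_iSupIndep_of_forall_exists_disjoint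
    (fun W hW hW0 => exists_square_or_zigzag_summand hb hW hW0) D.isSubcomplex_top
  let _ := Classical.decEq ι
  exact ⟨ι, inferInstance, S,
    DirectSum.isInternal_submodule_of_iSupIndep_of_iSup_eq_top hindep hsup, hS⟩
end

section
/- For a bounded double complex of finite-dimensional complex vector spaces, the Frölicher inequality holds: for every k ∈ ℤ one has b_k ≤ Σ_{p+q=k} h_∂̄^{p,q}, and likewise b_k ≤ Σ_{p+q=k} h_∂^{p,q}. -/
open Submodule

/-!
Filter `Tot^k` by `F^p = ⨁_{a ≥ p} K^{a,k-a}`. The leading term `x` of a `d`-closed `x + y`, with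
`x ∈ K^{p,k-p}` and `y ∈ F^{p+1}`, is `∂̄`-closed, and if `x = ∂̄w` then subtracting `dw` leaves a
closed element of `F^{p+1}`. So the `p`-th graded piece of the induced filtration on `H_dR^k` is a
subquotient of `H_∂̄^{p,k-p}`, and adding up the ranks of these pieces bounds `b_k`. Exchanging the
two differentials gives the inequality for `H_∂`.
-/

section Subquotient

universe u

variable {R : Type*} {V : Type u} [Ring R] [AddCommGroup V] [Module R V]

/-- The rank of the quotient of `M` by the trace of `N` on it, as a cardinal. It is the version of
`qdim` that stays meaningful for infinite-dimensional quotients. -/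
noncomputable def qrank (M N : Submodule R V) : Cardinal.{u} :=
  Module.rank R (↥M ⧸ N.comap M.subtype)

lemma qrank_eq_rank_map_mkQ (M N : Submodule R V) :
    qrank M N = Module.rank R (M.map N.mkQ) := by
  have hker : LinearMap.ker (N.mkQ ∘ₗ M.subtype) = N.comap M.subtype := by
    rw [LinearMap.ker_comp, ker_mkQ]
  have hrange : LinearMap.range (N.mkQ ∘ₗ M.subtype) = M.map N.mkQ := by
    rw [LinearMap.range_comp, range_subtype]
  rw [qrank, ← hker, ← hrange]
  exact (N.mkQ ∘ₗ M.subtype).quotKerEquivRange.rank_eq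

lemma qrank_eq_zero_of_le [Nontrivial R] {M N : Submodule R V} (h : M ≤ N) : qrank M N = 0 := by
  rw [qrank_eq_rank_map_mkQ, LinearMap.le_ker_iff_map.mp (h.trans_eq N.ker_mkQ.symm), rank_bot]

lemma qrank_mono_left {M M' : Submodule R V} (N : Submodule R V) (h : M ≤ M') :
    qrank M N ≤ qrank M' N := by
  simpa only [qrank_eq_rank_map_mkQ] using rank_mono (map_mono h)

lemma qrank_le_of_inf_le {M N N' : Submodule R V} (h : M ⊓ N' ≤ N) :
    qrank M N ≤ qrank M N' :=
  LinearMap.rank_le_of_surjective _ <|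
    factor_surjective (p := N'.comap M.subtype) (p' := N.comap M.subtype) fun x hx => h ⟨x.2, hx⟩

lemma qrank_sup_sup_le (M N L : Submodule R V) : qrank (M ⊔ L) (N ⊔ L) ≤ qrank M N := by
  have hmap : (M ⊔ L).map (N ⊔ L).mkQ = (M.map N.mkQ).map (factor (le_sup_left : N ≤ N ⊔ L)) := by
    have hL : L.map (N ⊔ L).mkQ = ⊥ := by
      rw [← LinearMap.le_ker_iff_map, ker_mkQ]
      exact le_sup_right
    rw [Submodule.map_sup, hL, sup_bot_eq, ← map_comp, factor_comp_mk]
  rw [qrank_eq_rank_map_mkQ, qrank_eq_rank_map_mkQ, hmap]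
  exact rank_map_le _ _

lemma qrank_le_qrank_sup_add_qrank [HasRankNullity.{u} R] (M N L : Submodule R V) :
    qrank M N ≤ qrank M (L ⊔ N) + qrank L N := by
  let f : V ⧸ N →ₗ[R] V ⧸ (L ⊔ N) := factor le_sup_right
  let g := f.domRestrict (M.map N.mkQ)
  have hrange : LinearMap.range g = M.map (L ⊔ N).mkQ := by
    rw [LinearMap.range_domRestrict, ← map_comp, factor_comp_mk]
  have hker : (LinearMap.ker g).map (M.map N.mkQ).subtype ≤ L.map N.mkQ := by
    rw [LinearMap.ker_domRestrict, map_comap_subtype, ker_mapQ, comap_id, Submodule.map_sup,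
      mkQ_map_self, sup_bot_eq]
    exact inf_le_right
  calc qrank M N = Module.rank R (LinearMap.range g) + Module.rank R (LinearMap.ker g) := by
        rw [qrank_eq_rank_map_mkQ, g.rank_range_add_rank_ker]
    _ ≤ qrank M (L ⊔ N) + qrank L N := by
        rw [hrange, qrank_eq_rank_map_mkQ, qrank_eq_rank_map_mkQ,
          ← rank_map_eq (injective_subtype _) (LinearMap.ker g)]
        gcongr
        exact rank_mono hker

lemma qrank_le_sum_Ico [HasRankNullity.{u} R] {F : ℤ → Submodule R V} {N : Submodule R V}
    {m n : ℤ} (hmn : m ≤ n) (hF : F n ≤ N) :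
    qrank (F m) N ≤ ∑ p ∈ Finset.Ico m n, qrank (F p) (F (p + 1) ⊔ N) := by
  have := nontrivial_of_hasRankNullity.{u} R
  induction m, hmn using Int.leInductionDown with
  | base => simp [qrank_eq_zero_of_le hF]
  | pred p hp ih =>
    rw [← Finset.insert_Ico_add_one_left_eq_Ico (by omega), Finset.sum_insert (by simp),
      sub_add_cancel]
    exact (qrank_le_qrank_sup_add_qrank _ _ _).trans (by gcongr)

end Subquotient

lemma qdim_le_finsum_qdim_of_qrank_le {V : Type*} [AddCommGroup V] [Module ℂ V] {ι : Type*}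
    {M N : Submodule ℂ V} {M' N' : ι → Submodule ℂ V}
    [∀ i, FiniteDimensional ℂ (↥(M' i) ⧸ (N' i).comap (M' i).subtype)]
    (h : qrank M N ≤ ∑ᶠ i, qrank (M' i) (N' i)) :
    qdim M N ≤ ∑ᶠ i, qdim (M' i) (N' i) := by
  have hcast : ((∑ᶠ i, qdim (M' i) (N' i) : ℕ) : Cardinal) = ∑ᶠ i, qrank (M' i) (N' i) := by
    rw [← Nat.coe_castAddMonoidHom,
      AddMonoidHom.map_finsum_of_injective _ Nat.cast_injective]
    exact finsum_congr fun i => Module.finrank_eq_rank ℂ _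
  exact Module.finrank_le_of_rank_le (h.trans_eq hcast.symm)

namespace DoubleComplex

variable {V : Type*} [AddCommGroup V] [Module ℂ V] (D : DoubleComplex V)

lemma dT_dT_apply (x : V) : D.dT (D.dT x) = 0 := by
  simpa [dT, d1_d1_apply, d2_d2_apply, add_comm] using D.anticomm_apply x

lemma Bounded.exists_forall_notMem_Ico {D : DoubleComplex V} (hb : D.Bounded) :
    ∃ m n : ℤ, m ≤ n ∧ ∀ p q : ℤ, p ∉ Set.Ico m n → D.K p q = ⊥ := by
  have hfin := hb.image Prod.fst
  obtain ⟨m, hm⟩ := hfin.bddBelow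
  obtain ⟨n, hn⟩ := hfin.bddAbove
  refine ⟨min m (n + 1), n + 1, min_le_right _ _, fun p q hp => ?_⟩
  by_contra hK
  have hmem : p ∈ Prod.fst '' {pq : ℤ × ℤ | D.K pq.1 pq.2 ≠ ⊥} := ⟨(p, q), hK, rfl⟩
  exact hp ⟨(min_le_left _ _).trans (hm hmem), Int.lt_add_one_of_le (hn hmem)⟩

section Filtration

/-- The column filtration `F^p Tot^k = ⨁_{a ≥ p} K^{a,k-a}` of the total complex. -/
def filtration (p k : ℤ) : Submodule ℂ V := ⨆ a ∈ Set.Ici p, D.K a (k - a)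

/-- The `d`-closed elements of `F^p Tot^k`. Their image in `H_dR^k` is the `p`-th step of the
induced filtration. -/
def closedFiltration (p k : ℤ) : Submodule ℂ V := LinearMap.ker D.dT ⊓ D.filtration p k

variable {D} {p q k : ℤ}

lemma K_le_filtration {a : ℤ} (ha : p ≤ a) (hk : a + q = k) : D.K a q ≤ D.filtration p k := by
  obtain rfl : q = k - a := by omega
  exact le_biSup (fun a => D.K a (k - a)) ha

lemma filtration_eq_sup : D.filtration p k = D.K p (k - p) ⊔ D.filtration (p + 1) k := by
  have hIci : Set.Ici p = insert p (Set.Ici (p + 1)) := by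
    ext a
    simp only [Set.mem_Ici, Set.mem_insert_iff]
    omega
  rw [filtration, hIci, iSup_insert, filtration]

lemma disjoint_K_filtration : Disjoint (D.K p (k - p)) (D.filtration (p + 1) k) := by
  have hinj : Function.Injective fun a : ℤ => (a, k - a) := fun a b h => congrArg Prod.fst h
  exact (D.isInternal.submodule_iSupIndep.comp hinj).disjoint_biSup (by simp)

lemma map_dT_filtration_le : (D.filtration p k).map D.dT ≤ D.filtration p (k + 1) := by
  simp only [filtration, Submodule.map_iSup, iSup_le_iff, Submodule.map_le_iff_le_comap]
  intro a ha x hx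
  exact add_mem (K_le_filtration (ha.trans (by omega)) (by ring) (D.d1_mem _ _ x hx))
    (K_le_filtration ha (by ring) (D.d2_mem _ _ x hx))

lemma Tot_eq_filtration {m : ℤ} (hK : ∀ a < m, D.K a (k - a) = ⊥) :
    D.Tot k = D.filtration m k := by
  refine le_antisymm (iSup_le fun a => ?_) (iSup₂_le fun a _ => le_iSup (fun a => D.K a (k - a)) a)
  obtain ha | ha := lt_or_ge a m
  · simp only [hK a ha, bot_le]
  · exact K_le_filtration ha (by ring)

lemma filtration_eq_bot {n : ℤ} (hK : ∀ a ≥ n, D.K a (k - a) = ⊥) : D.filtration n k = ⊥ := by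
  simpa only [filtration, iSup_eq_bot, Set.mem_Ici] using hK

lemma d2_eq_zero_of_dT_add_eq_zero {x y : V} (hx : x ∈ D.K p (k - p))
    (hy : y ∈ D.filtration (p + 1) k) (hxy : D.dT (x + y) = 0) : D.d2 x = 0 := by
  have hd2 : D.d2 x = -(D.d1 x + D.dT y) := by
    rw [map_add, dT, LinearMap.add_apply, add_right_comm] at hxy
    exact eq_neg_of_add_eq_zero_right hxy
  have hmem : D.d2 x ∈ D.filtration (p + 1) (k + 1) := by
    rw [hd2]
    exact neg_mem (add_mem (K_le_filtration le_rfl (by ring) (D.d1_mem _ _ x hx))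
      (map_dT_filtration_le (mem_map_of_mem hy)))
  refine disjoint_def.mp disjoint_K_filtration _ ?_ hmem
  rw [add_sub_right_comm]
  exact D.d2_mem _ _ x hx

lemma closedFiltration_le_dolN_sup :
    D.closedFiltration p k ≤ D.dolN p (k - p) ⊔ D.filtration (p + 1) k := by
  rintro z ⟨hz, hzF⟩
  rw [SetLike.mem_coe, filtration_eq_sup] at hzF
  obtain ⟨x, hx, y, hy, rfl⟩ := mem_sup.mp hzF
  exact add_mem_sup ⟨d2_eq_zero_of_dT_add_eq_zero hx hy hz, hx⟩ hy

lemma ker_dT_inf_dolD_sup_le :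
    LinearMap.ker D.dT ⊓ (D.dolD p (k - p) ⊔ D.filtration (p + 1) k) ≤
      D.closedFiltration (p + 1) k ⊔ D.dRD k := by
  rintro z ⟨hz, hzE⟩
  obtain ⟨-, ⟨w, hw, rfl⟩, y, hy, rfl⟩ := mem_sup.mp hzE
  have hdw : D.dT w ∈ D.dRD k := by
    refine mem_map_of_mem (mem_iSup_of_mem p ?_)
    rwa [sub_right_comm]
  have hd1w : D.d1 w ∈ D.filtration (p + 1) k :=
    K_le_filtration le_rfl (by ring) (D.d1_mem _ _ w hw)
  have hsplit : D.d2 w + y = (y - D.d1 w) + D.dT w := by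
    rw [dT, LinearMap.add_apply]
    abel
  have hclosed : D.dT (y - D.d1 w) = 0 := by
    rwa [SetLike.mem_coe, LinearMap.mem_ker, hsplit, map_add, dT_dT_apply, add_zero] at hz
  rw [hsplit]
  exact add_mem_sup ⟨hclosed, sub_mem hy hd1w⟩ hdw

variable (D p k) in
lemma qrank_closedFiltration_le :
    qrank (D.closedFiltration p k) (D.closedFiltration (p + 1) k ⊔ D.dRD k) ≤
      qrank (D.dolN p (k - p)) (D.dolD p (k - p)) := by
  set F := D.filtration (p + 1) k
  calc qrank (D.closedFiltration p k) (D.closedFiltration (p + 1) k ⊔ D.dRD k)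
      ≤ qrank (D.closedFiltration p k) (D.dolD p (k - p) ⊔ F) :=
        qrank_le_of_inf_le ((inf_le_inf_right _ inf_le_left).trans ker_dT_inf_dolD_sup_le)
    _ ≤ qrank (D.dolN p (k - p) ⊔ F) (D.dolD p (k - p) ⊔ F) :=
        qrank_mono_left _ closedFiltration_le_dolN_sup
    _ ≤ qrank (D.dolN p (k - p)) (D.dolD p (k - p)) := qrank_sup_sup_le _ _ _

end Filtration

lemma qrank_dR_le_finsum_dol (hb : D.Bounded) (k : ℤ) :
    qrank (D.dRN k) (D.dRD k) ≤ ∑ᶠ p : ℤ, qrank (D.dolN p (k - p)) (D.dolD p (k - p)) := by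
  obtain ⟨m, n, hmn, hK⟩ := hb.exists_forall_notMem_Ico
  have hbot : D.closedFiltration m k = D.dRN k := by
    rw [closedFiltration, dRN, Tot_eq_filtration fun a ha => hK a _ fun h => ha.not_ge h.1]
  have htop : D.closedFiltration n k ≤ D.dRD k := by
    rw [closedFiltration, filtration_eq_bot fun a ha => hK a _ fun h => h.2.not_ge ha, inf_bot_eq]
    exact bot_le
  have hsupp : (Function.support fun p => qrank (D.dolN p (k - p)) (D.dolD p (k - p))) ⊆
      Finset.Ico m n := by
    intro p hp
    by_contra hpmn
    rw [Finset.coe_Ico] at hpmn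
    refine hp (qrank_eq_zero_of_le ?_)
    rw [dolN, hK p _ hpmn, inf_bot_eq]
    exact bot_le
  rw [finsum_eq_sum_of_support_subset _ hsupp, ← hbot]
  exact (qrank_le_sum_Ico hmn htop).trans
    (Finset.sum_le_sum fun p _ => D.qrank_closedFiltration_le p k)

section Swap

/-- The double complex obtained by exchanging the two gradings and the two differentials. Its
Dolbeault cohomology is the conjugate Dolbeault cohomology of `D`. -/
def swap : DoubleComplex V where
  K p q := D.K q p
  isInternal := by
    rw [DirectSum.isInternal_submodule_iff_iSupIndep_and_iSup_eq_top]
    refine ⟨D.isInternal.submodule_iSupIndep.comp (f := Prod.swap) Prod.swap_injective, ?_⟩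
    rw [← D.isInternal.submodule_iSup_eq_top]
    exact (Equiv.prodComm ℤ ℤ).iSup_comp (g := fun pq : ℤ × ℤ => D.K pq.1 pq.2)
  d1 := D.d2
  d2 := D.d1
  d1_mem p q := D.d2_mem q p
  d2_mem p q := D.d1_mem q p
  d1_d1 := D.d2_d2
  d2_d2 := D.d1_d1
  anticomm := (add_comm _ _).trans D.anticomm

variable {D} in
lemma Bounded.swap (hb : D.Bounded) : D.swap.Bounded :=
  hb.preimage (f := Prod.swap) Prod.swap_injective.injOn

lemma Tot_swap (k : ℤ) : D.swap.Tot k = D.Tot k := by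
  simpa [Tot, swap] using (Equiv.subLeft k).iSup_comp (g := fun p : ℤ => D.K p (k - p))

lemma dT_swap : D.swap.dT = D.dT := add_comm _ _

lemma dRN_swap (k : ℤ) : D.swap.dRN k = D.dRN k := by
  rw [dRN, dRN, Tot_swap, dT_swap]

lemma dRD_swap (k : ℤ) : D.swap.dRD k = D.dRD k := by
  rw [dRD, dRD, Tot_swap, dT_swap]

lemma finsum_qrank_dol_swap (k : ℤ) :
    ∑ᶠ p : ℤ, qrank (D.swap.dolN p (k - p)) (D.swap.dolD p (k - p)) =
      ∑ᶠ p : ℤ, qrank (D.conjN p (k - p)) (D.conjD p (k - p)) := by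
  rw [← finsum_comp_equiv (Equiv.subLeft k)]
  refine finsum_congr fun p => ?_
  rw [Equiv.subLeft_apply, sub_sub_cancel]
  rfl

end Swap

end DoubleComplex

theorem frolicher_inequality_general {V : Type*} [AddCommGroup V] [Module ℂ V]
    (D : DoubleComplex V) (hb : D.Bounded) (k : ℤ) :
    qrank (D.dRN k) (D.dRD k) ≤ ∑ᶠ p : ℤ, qrank (D.dolN p (k - p)) (D.dolD p (k - p)) ∧
      qrank (D.dRN k) (D.dRD k) ≤ ∑ᶠ p : ℤ, qrank (D.conjN p (k - p)) (D.conjD p (k - p)) := by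
  refine ⟨D.qrank_dR_le_finsum_dol hb k, ?_⟩
  rw [← D.dRN_swap, ← D.dRD_swap, ← D.finsum_qrank_dol_swap]
  exact D.swap.qrank_dR_le_finsum_dol hb.swap k

open DoubleComplex in
/-- **Frölicher inequality.** For a bounded double complex of finite-dimensional
complex vector spaces, for every `k` one has `b_k ≤ Σ_{p+q=k} h_∂̄^{p,q}` and
`b_k ≤ Σ_{p+q=k} h_∂^{p,q}`. -/
theorem frolicher_inequality {V : Type*} [AddCommGroup V] [Module ℂ V]
    [FiniteDimensional ℂ V] (D : DoubleComplex V) (hb : D.Bounded) (k : ℤ) :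
    D.b k ≤ ∑ᶠ p : ℤ, D.hDol p (k - p) ∧ D.b k ≤ ∑ᶠ p : ℤ, D.hConj p (k - p) := by
  exact (frolicher_inequality_general D hb k).imp
    qdim_le_finsum_qdim_of_qrank_le qdim_le_finsum_qdim_of_qrank_le
end

section
/- For a double complex of complex vector spaces and every bidegree (p,q), the sequence 0 → A^{p,q} → B^{p,q} → H_∂̄^{p,q} → H_A^{p,q} → C^{p,q} → 0 is exact, where the first map is induced by the inclusion im ∂ ∩ im ∂̄ ⊆ ker ∂̄ ∩ im ∂, the second and third maps are induced by the identity on representatives, and the last map is the natural projection. -/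
/-!
All maps in the sequence are induced by the identity of `V` on subquotients `M / N` of `V`. A
sequence `M₁ / N₁ → M₂ / N₂ → M₃ / N₃` of such maps is exact at the middle term iff `M₁ ≤ N₃` and
`M₂ ⊓ N₃ ≤ M₁ ⊔ N₂`, so exactness is a matter of inclusions in the modular lattice of subspaces.
The only place where modularity enters is `H_∂̄`: since `im ∂̄ ≤ ker ∂̄`,
`ker ∂̄ ⊓ (im ∂ ⊔ im ∂̄) = (ker ∂̄ ⊓ im ∂) ⊔ im ∂̄`.
-/

open Submodule

namespace DoubleComplex

variable {V : Type*} [AddCommGroup V] [Module ℂ V] (D : DoubleComplex V)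

lemma dolD_le_ker (p q : ℤ) : D.dolD p q ≤ LinearMap.ker D.d2 := by
  rintro x ⟨y, -, rfl⟩
  exact LinearMap.mem_ker.mpr (D.d2_d2_apply y)

lemma dolD_le_K (p q : ℤ) : D.dolD p q ≤ D.K p q := by
  rintro x ⟨y, hy, rfl⟩
  have h := D.d2_mem p (q - 1) y hy
  rwa [show q - 1 + 1 = q by ring] at h

lemma conjD_le_ker (p q : ℤ) : D.conjD p q ≤ LinearMap.ker D.d1 := by
  rintro x ⟨y, -, rfl⟩
  exact LinearMap.mem_ker.mpr (D.d1_d1_apply y)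

lemma conjD_le_K (p q : ℤ) : D.conjD p q ≤ D.K p q := by
  rintro x ⟨y, hy, rfl⟩
  have h := D.d1_mem (p - 1) q y hy
  rwa [show p - 1 + 1 = p by ring] at h

lemma ker_d2_le_ker_comp : LinearMap.ker D.d2 ≤ LinearMap.ker (D.d1 ∘ₗ D.d2) := by
  intro x hx
  have hx' : D.d2 x = 0 := hx
  simp only [LinearMap.mem_ker, LinearMap.comp_apply, hx', map_zero]

lemma ker_d1_le_ker_comp : LinearMap.ker D.d1 ≤ LinearMap.ker (D.d1 ∘ₗ D.d2) := by
  intro x hx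
  have hx' : D.d1 x = 0 := hx
  have h := D.anticomm_apply x
  rw [hx', map_zero, add_zero] at h
  exact LinearMap.mem_ker.mpr h

lemma bcD_le_dolD (p q : ℤ) : D.bcD p q ≤ D.dolD p q := by
  rintro x ⟨y, hy, rfl⟩
  refine ⟨-(D.d1 y), neg_mem ?_, ?_⟩
  · have h := D.d1_mem (p - 1) (q - 1) y hy
    rwa [show p - 1 + 1 = p by ring] at h
  · rw [map_neg, LinearMap.comp_apply]
    exact neg_eq_of_add_eq_zero_left (D.anticomm_apply y)

lemma bcD_le_conjD (p q : ℤ) : D.bcD p q ≤ D.conjD p q := by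
  rintro x ⟨y, hy, rfl⟩
  refine ⟨D.d2 y, ?_, rfl⟩
  have h := D.d2_mem (p - 1) (q - 1) y hy
  rwa [show q - 1 + 1 = q by ring] at h

end DoubleComplex

namespace DoubleComplex

variable {V : Type*} [AddCommGroup V] [Module ℂ V] (D : DoubleComplex V)

/-- Numerator `im ∂ ∩ im ∂̄ ∩ K^{p,q}` of the Varouchas space
`A^{p,q} = (im ∂ ∩ im ∂̄)/im ∂∂̄`. -/
def varAN (p q : ℤ) : Submodule ℂ V := D.conjD p q ⊓ D.dolD p q

/-- Numerator `ker ∂̄ ∩ im ∂ ∩ K^{p,q}` of the Varouchas space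
`B^{p,q} = (ker ∂̄ ∩ im ∂)/im ∂∂̄`. -/
def varBN (p q : ℤ) : Submodule ℂ V := LinearMap.ker D.d2 ⊓ D.conjD p q

/-- Denominator `(ker ∂̄ + im ∂) ∩ K^{p,q}` of the Varouchas space
`C^{p,q} = ker ∂∂̄/(ker ∂̄ + im ∂)`. -/
def varCD (p q : ℤ) : Submodule ℂ V := (LinearMap.ker D.d2 ⊓ D.K p q) ⊔ D.conjD p q

/-- The map `A^{p,q} → B^{p,q}` induced by the inclusion `im ∂ ∩ im ∂̄ ⊆ ker ∂̄ ∩ im ∂`. -/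
def mapAB (p q : ℤ) :
    (↥(D.varAN p q) ⧸ (D.bcD p q).comap (D.varAN p q).subtype) →ₗ[ℂ]
    (↥(D.varBN p q) ⧸ (D.bcD p q).comap (D.varBN p q).subtype) :=
  quotMap (le_inf (inf_le_right.trans (D.dolD_le_ker p q)) inf_le_left) le_rfl

/-- The map `B^{p,q} → H_∂̄^{p,q}` induced by the identity on representatives. -/
def mapBDol (p q : ℤ) :
    (↥(D.varBN p q) ⧸ (D.bcD p q).comap (D.varBN p q).subtype) →ₗ[ℂ]
    (↥(D.dolN p q) ⧸ (D.dolD p q).comap (D.dolN p q).subtype) :=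
  quotMap (le_inf inf_le_left (inf_le_right.trans (D.conjD_le_K p q)))
    (D.bcD_le_dolD p q)

/-- The map `H_∂̄^{p,q} → H_A^{p,q}` induced by the identity on representatives. -/
def mapDolAe (p q : ℤ) :
    (↥(D.dolN p q) ⧸ (D.dolD p q).comap (D.dolN p q).subtype) →ₗ[ℂ]
    (↥(D.aeN p q) ⧸ (D.aeD p q).comap (D.aeN p q).subtype) :=
  quotMap (inf_le_inf_right (D.K p q) D.ker_d2_le_ker_comp) le_sup_right

/-- The natural projection `H_A^{p,q} → C^{p,q}`. -/
def mapAeC (p q : ℤ) :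
    (↥(D.aeN p q) ⧸ (D.aeD p q).comap (D.aeN p q).subtype) →ₗ[ℂ]
    (↥(D.aeN p q) ⧸ (D.varCD p q).comap (D.aeN p q).subtype) :=
  quotMap le_rfl
    (sup_le le_sup_right
      ((le_inf (D.dolD_le_ker p q) (D.dolD_le_K p q)).trans le_sup_left))

end DoubleComplex

section QuotMap

variable {V : Type*} [AddCommGroup V] [Module ℂ V] {M₁ N₁ M₂ N₂ M₃ N₃ : Submodule ℂ V}

lemma mk_mem_ker_quotMap_iff {hM : M₁ ≤ M₂} {hN : N₁ ≤ N₂} {x : M₁} :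
    Submodule.Quotient.mk x ∈ LinearMap.ker (quotMap hM hN) ↔ (x : V) ∈ N₂ :=
  Submodule.Quotient.mk_eq_zero (N₂.comap M₂.subtype) (x := Submodule.inclusion hM x)

lemma mk_mem_range_quotMap_iff {hM : M₁ ≤ M₂} {hN : N₁ ≤ N₂} {x : M₂} :
    Submodule.Quotient.mk x ∈ LinearMap.range (quotMap hM hN) ↔ (x : V) ∈ M₁ ⊔ N₂ := by
  rw [Submodule.mem_sup]
  constructor
  · rintro ⟨y, hy⟩
    obtain ⟨y, rfl⟩ := Submodule.Quotient.mk_surjective _ y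
    have hxy : x - Submodule.inclusion hM y ∈ N₂.comap M₂.subtype :=
      (Submodule.Quotient.eq _).1 hy.symm
    exact ⟨y, y.2, x - y, hxy, add_sub_cancel _ _⟩
  · rintro ⟨m, hm, n, hn, hx⟩
    have hmx : m - x ∈ N₂ := by
      rw [← hx, sub_add_cancel_left]
      exact neg_mem hn
    exact ⟨Submodule.Quotient.mk ⟨m, hm⟩, (Submodule.Quotient.eq _).2 hmx⟩

lemma quotMap_injective_iff {hM : M₁ ≤ M₂} {hN : N₁ ≤ N₂} :
    Function.Injective (quotMap hM hN) ↔ M₁ ⊓ N₂ ≤ N₁ := by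
  simp only [← LinearMap.ker_eq_bot, eq_bot_iff, SetLike.le_def,
    (Submodule.Quotient.mk_surjective _).forall, mk_mem_ker_quotMap_iff, Submodule.mem_bot,
    Submodule.Quotient.mk_eq_zero, Submodule.mem_comap, Submodule.subtype_apply, Subtype.forall,
    Submodule.mem_inf, and_imp]

lemma quotMap_surjective_iff {hM : M₁ ≤ M₂} {hN : N₁ ≤ N₂} :
    Function.Surjective (quotMap hM hN) ↔ M₂ ≤ M₁ ⊔ N₂ := by
  simp only [← LinearMap.range_eq_top, Submodule.eq_top_iff', SetLike.le_def,
    (Submodule.Quotient.mk_surjective _).forall, mk_mem_range_quotMap_iff, Subtype.forall]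

lemma range_quotMap_eq_ker_quotMap_iff {hM : M₁ ≤ M₂} {hN : N₁ ≤ N₂} {hM' : M₂ ≤ M₃}
    {hN' : N₂ ≤ N₃} :
    LinearMap.range (quotMap hM hN) = LinearMap.ker (quotMap hM' hN') ↔
      M₁ ≤ N₃ ∧ M₂ ⊓ N₃ ≤ M₁ ⊔ N₂ := by
  have mem_iff : LinearMap.range (quotMap hM hN) = LinearMap.ker (quotMap hM' hN') ↔
      ∀ x ∈ M₂, x ∈ M₁ ⊔ N₂ ↔ x ∈ N₃ := by
    simp only [SetLike.ext_iff, (Submodule.Quotient.mk_surjective _).forall,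
      mk_mem_range_quotMap_iff, mk_mem_ker_quotMap_iff, Subtype.forall]
  rw [mem_iff]
  constructor
  · intro h
    exact ⟨fun x hx => (h x (hM hx)).1 (Submodule.mem_sup_left hx),
      fun x hx => (h x hx.1).2 hx.2⟩
  · rintro ⟨hle, hinf⟩ x hx
    exact ⟨fun hx' => sup_le hle hN' hx', fun hx' => hinf ⟨hx, hx'⟩⟩

end QuotMap

namespace DoubleComplex

variable {V : Type*} [AddCommGroup V] [Module ℂ V] (D : DoubleComplex V) (p q : ℤ)

lemma dolD_le_dolN : D.dolD p q ≤ D.dolN p q :=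
  le_inf (D.dolD_le_ker p q) (D.dolD_le_K p q)

lemma aeD_le_K : D.aeD p q ≤ D.K p q :=
  sup_le (D.conjD_le_K p q) (D.dolD_le_K p q)

lemma varBN_inf_dolD : D.varBN p q ⊓ D.dolD p q = D.varAN p q :=
  calc LinearMap.ker D.d2 ⊓ D.conjD p q ⊓ D.dolD p q
      = LinearMap.ker D.d2 ⊓ (D.conjD p q ⊓ D.dolD p q) := inf_assoc _ _ _
    _ = D.conjD p q ⊓ D.dolD p q := inf_eq_right.2 (inf_le_right.trans (D.dolD_le_ker p q))

lemma dolN_inf_aeD : D.dolN p q ⊓ D.aeD p q = D.varBN p q ⊔ D.dolD p q :=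
  calc LinearMap.ker D.d2 ⊓ D.K p q ⊓ D.aeD p q
      = LinearMap.ker D.d2 ⊓ (D.conjD p q ⊔ D.dolD p q) := by
        rw [inf_assoc, inf_eq_right.2 (D.aeD_le_K p q), aeD, conjD, dolD]
    _ = LinearMap.ker D.d2 ⊓ D.conjD p q ⊔ D.dolD p q :=
        (inf_sup_assoc_of_le _ (D.dolD_le_ker p q)).symm

lemma dolN_sup_aeD : D.dolN p q ⊔ D.aeD p q = D.varCD p q :=
  calc D.dolN p q ⊔ (D.conjD p q ⊔ D.dolD p q)
      = D.dolN p q ⊔ D.dolD p q ⊔ D.conjD p q := by rw [sup_comm (D.conjD p q), sup_assoc]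
    _ = D.dolN p q ⊔ D.conjD p q := by rw [sup_eq_left.2 (D.dolD_le_dolN p q)]

end DoubleComplex

open DoubleComplex in
/-- **Varouchas' first exact sequence.** For a double complex of complex vector spaces
and every bidegree `(p,q)`, the sequence
`0 → A^{p,q} → B^{p,q} → H_∂̄^{p,q} → H_A^{p,q} → C^{p,q} → 0`
is exact, where the maps are induced by the inclusion `im ∂ ∩ im ∂̄ ⊆ ker ∂̄ ∩ im ∂`,
by the identity on representatives, and by the natural projection. -/
theorem varouchas_first_exact_sequence {V : Type*} [AddCommGroup V] [Module ℂ V]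
    (D : DoubleComplex V) (p q : ℤ) :
    Function.Injective (D.mapAB p q) ∧
    LinearMap.range (D.mapAB p q) = LinearMap.ker (D.mapBDol p q) ∧
    LinearMap.range (D.mapBDol p q) = LinearMap.ker (D.mapDolAe p q) ∧
    LinearMap.range (D.mapDolAe p q) = LinearMap.ker (D.mapAeC p q) ∧
    Function.Surjective (D.mapAeC p q) := by
  refine ⟨?injAB, ?exactB, ?exactDol, ?exactAe, ?surjC⟩
  case injAB => exact quotMap_injective_iff.2 inf_le_right
  case exactB =>
    exact range_quotMap_eq_ker_quotMap_iff.2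
      ⟨inf_le_right, (D.varBN_inf_dolD p q).le.trans le_sup_left⟩
  case exactDol =>
    exact range_quotMap_eq_ker_quotMap_iff.2
      ⟨inf_le_right.trans le_sup_left, (D.dolN_inf_aeD p q).le⟩
  case exactAe =>
    exact range_quotMap_eq_ker_quotMap_iff.2
      ⟨le_sup_left, inf_le_right.trans (D.dolN_sup_aeD p q).ge⟩
  case surjC => exact quotMap_surjective_iff.2 le_sup_left
end

section
/- For a double complex of complex vector spaces and every bidegree (p,q), the map ∂̄ induces a well-defined linear isomorphism from C^{p,q} = (ker ∂∂̄ ∩ K^{p,q})/(ker ∂̄ + im ∂) onto D^{p,q+1} = (im ∂̄ ∩ ker ∂ ∩ K^{p,q+1})/im ∂∂̄. -/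
open Submodule

namespace DoubleComplex

variable {V : Type*} [AddCommGroup V] [Module ℂ V] (D : DoubleComplex V)

/-- Numerator `im ∂̄ ∩ ker ∂ ∩ K^{p,q}` of the Varouchas space
`D^{p,q} = (im ∂̄ ∩ ker ∂)/im ∂∂̄`. -/
def varDN (p q : ℤ) : Submodule ℂ V := D.dolD p q ⊓ LinearMap.ker D.d1

end DoubleComplex

/-!
Let `L` and `K` be submodules with `∂L ≤ K`. As `∂∂̄ = -∂̄∂`, the submodule `∂∂̄L` is the image of
`∂L` under `∂̄`, so its preimage under `∂̄` is `ker ∂̄ + ∂L`, which meets `K` in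
`(ker ∂̄ ∩ K) + ∂L` by the modular law. Hence `∂̄`, which maps `ker ∂∂̄ ∩ K` onto `∂̄K ∩ ker ∂`, is
also injective modulo `(ker ∂̄ ∩ K) + ∂L` and `∂∂̄L`.
-/

section Module

variable {R V W U : Type*} [Ring R] [AddCommGroup V] [Module R V] [AddCommGroup W] [Module R W]
  [AddCommGroup U] [Module R U]

lemma mapQ_bijective_of_eq_comap {f : V →ₗ[R] W} (hf : Function.Surjective f)
    {N : Submodule R V} {N' : Submodule R W} (hN : N = N'.comap f) :
    Function.Bijective (N.mapQ N' f hN.le) := by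
  constructor
  · rw [← LinearMap.ker_eq_bot, ker_mapQ, ← hN, mkQ_map_self]
  · rw [← LinearMap.range_eq_top, range_mapQ, LinearMap.range_eq_top.mpr hf, Submodule.map_top,
      range_mkQ]

lemma map_ker_comp_inf (g : W →ₗ[R] U) (f : V →ₗ[R] W) (K : Submodule R V) :
    (LinearMap.ker (g ∘ₗ f) ⊓ K).map f = K.map f ⊓ LinearMap.ker g := by
  rw [map_inf_eq_map_inf_comap, LinearMap.ker_comp, inf_comm]

lemma comap_map_inf_of_le (f : V →ₗ[R] W) {M K : Submodule R V} (hMK : M ≤ K) :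
    (M.map f).comap f ⊓ K = (LinearMap.ker f ⊓ K) ⊔ M := by
  rw [comap_map_eq, sup_inf_assoc_of_le _ hMK, sup_comm]

lemma map_comp_of_anticomm {d₁ d₂ : V →ₗ[R] V} (h : d₁ ∘ₗ d₂ + d₂ ∘ₗ d₁ = 0)
    (L : Submodule R V) : L.map (d₁ ∘ₗ d₂) = (L.map d₁).map d₂ := by
  rw [eq_neg_of_add_eq_zero_left h, Submodule.map_neg, map_comp]

theorem dbar_induces_iso_C_D_general {d₁ d₂ : V →ₗ[R] V} (h : d₁ ∘ₗ d₂ + d₂ ∘ₗ d₁ = 0)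
    {K L : Submodule R V} (hLK : L.map d₁ ≤ K) :
    ∃ e : (↥(LinearMap.ker (d₁ ∘ₗ d₂) ⊓ K) ⧸
            ((LinearMap.ker d₂ ⊓ K) ⊔ L.map d₁).comap (LinearMap.ker (d₁ ∘ₗ d₂) ⊓ K).subtype) ≃ₗ[R]
          (↥(K.map d₂ ⊓ LinearMap.ker d₁) ⧸
            (L.map (d₁ ∘ₗ d₂)).comap (K.map d₂ ⊓ LinearMap.ker d₁).subtype),
      ∀ (x : V) (hx : x ∈ LinearMap.ker (d₁ ∘ₗ d₂) ⊓ K),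
        e (Submodule.Quotient.mk ⟨x, hx⟩) =
          Submodule.Quotient.mk ⟨d₂ x, mem_map_of_mem hx.2, hx.1⟩ := by
  have maps_to : ∀ x ∈ LinearMap.ker (d₁ ∘ₗ d₂) ⊓ K, d₂ x ∈ K.map d₂ ⊓ LinearMap.ker d₁ :=
    fun _ hx => ⟨mem_map_of_mem hx.2, hx.1⟩
  have surjective : Function.Surjective (d₂.restrict maps_to) := by
    rw [← LinearMap.range_eq_top, LinearMap.range_restrict, map_ker_comp_inf, comap_subtype_self]
  have denominator_eq :
      ((LinearMap.ker d₂ ⊓ K) ⊔ L.map d₁).comap (LinearMap.ker (d₁ ∘ₗ d₂) ⊓ K).subtype =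
        ((L.map (d₁ ∘ₗ d₂)).comap (K.map d₂ ⊓ LinearMap.ker d₁).subtype).comap
          (d₂.restrict maps_to) := by
    rw [map_comp_of_anticomm h, ← comap_map_inf_of_le d₂ hLK]
    ext x
    exact and_iff_left x.2.2
  exact ⟨.ofBijective _ (mapQ_bijective_of_eq_comap surjective denominator_eq), fun _ _ => rfl⟩

end Module

lemma DoubleComplex.conjD_le_K_s4 {V : Type*} [AddCommGroup V] [Module ℂ V] (D : DoubleComplex V)
    (p q : ℤ) : D.conjD p q ≤ D.K p q := by
  rintro _ ⟨y, hy, rfl⟩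
  simpa only [sub_add_cancel] using D.d1_mem (p - 1) q y hy

open DoubleComplex in
/-- For a double complex of complex vector spaces and every bidegree `(p,q)`, the map
`∂̄` induces a well-defined linear isomorphism from
`C^{p,q} = ker ∂∂̄/(ker ∂̄ + im ∂)` onto `D^{p,q+1} = (im ∂̄ ∩ ker ∂)/im ∂∂̄`. -/
theorem dbar_induces_iso_C_D {V : Type*} [AddCommGroup V] [Module ℂ V]
    (D : DoubleComplex V) (p q : ℤ) :
    ∃ e : (↥(D.aeN p q) ⧸ (D.varCD p q).comap (D.aeN p q).subtype) ≃ₗ[ℂ]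
          (↥(D.varDN p (q + 1)) ⧸ (D.bcD p (q + 1)).comap (D.varDN p (q + 1)).subtype),
      ∀ (x : V) (hx : x ∈ D.aeN p q),
        e (Submodule.Quotient.mk ⟨x, hx⟩) =
          Submodule.Quotient.mk
            ⟨D.d2 x, by
              refine ⟨Submodule.mem_map.mpr ⟨x, ?_, rfl⟩, ?_⟩
              · rw [show q + 1 - 1 = q by ring]; exact hx.2
              · exact LinearMap.mem_ker.mpr
                  (by simpa using LinearMap.mem_ker.mp hx.1)⟩ := by
  generalize_proofs _ d2_mem_varDN
  -- With `q = r - 1`, both sides involve the same component `K p (r - 1)` definitionally.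
  generalize hr : q + 1 = r at d2_mem_varDN ⊢
  obtain rfl : q = r - 1 := by lia
  exact dbar_induces_iso_C_D_general D.anticomm (D.conjD_le_K_s4 p (r - 1))
end
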